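/- arXiv:0902.3203 — 3 statements merged into one kernel-verified Lean document; each statement's English description precedes it below -/
import Mathlib

section
/- Let k ≥ 1 be an integer and let h be a holomorphic function on an open neighborhood of 0 in ℂ² with vanishing order exactly k at 0, such that neither coordinate function z₁ nor z₂ divides h in the ring of germs of holomorphic functions at 0 (equivalently, neither h(0, ·) nor h(·, 0) is identically zero near 0). Define f(z₁, z₂) = z₁^{2k} · z₂^{k} · h(z₁, z₂). Then the complex singularity exponent of f at 0 is strictly greater than 1/(3k): there exists a real number c > 1/(3k) such that z ↦ |f(z)|^{-2c} is integrable on some open neighborhood of 0 with respect to Lebesgue measure on ℂ² ≅ ℝ⁴. (Lemma 5.2.) -/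
open MeasureTheory

open Filter Metric Set Topology
open scoped ENNReal

/-!
By the weighted AM-GM inequality, the exponents `(a, b, d) ≥ 0` for which
`|z₁|^(-a) |z₂|^(-b) |h|^(-d)` is integrable near `0` form a convex set. It contains
* `(a, b, 0)` for `a, b < 2`;
* `(0, 0, d)` for `d < 2 / k`, by Skoda's theorem;
* `(a, 0, d)` for `a < 2` and some `d > 0`, because `z₁ ∤ h`.
The first two families alone only reach the point `(4/3, 2/3, 2 / (3k))` of the ray through
`(2k, k, 1)` in the limit; the third one pushes past it.

The last two memberships have the same source: if the `n`-th derivative of `h` at `p` in the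
direction `v` is nonzero, then splitting off zeros by divided differences gives
`|h (z + t v)| ≥ c ∏ |t - xᵢ|` with `n` points `xᵢ` and with `c` uniform in `z` near `p`. Hence
`|h|^(-s)` with `s n < 2` has uniformly bounded integrals over the slices in the direction `v`, and
averaging over translations along `v` turns this into integrability against any integrable weight
that is constant in that direction.
-/

section Smoothness

variable {E : Type*} [NormedAddCommGroup E] [NormedSpace ℂ E]

lemma eventually_norm_fderiv_le {F : Type*} [NormedAddCommGroup F] [NormedSpace ℂ F]
    {f : E → F} {p : E} (hf : ∀ᶠ z in 𝓝 p, DifferentiableAt ℂ f z) :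
    ∃ C, ∀ᶠ z in 𝓝 p, ‖fderiv ℂ f z‖ ≤ C := by
  have hnear : ∀ᶠ z in 𝓝 p, DifferentiableAt ℂ f z ∧ f z ∈ ball (f p) 1 :=
    hf.and (hf.self_of_nhds.continuousAt (ball_mem_nhds _ one_pos))
  obtain ⟨r, hr, hball⟩ := eventually_nhds_iff_ball.1 hnear
  refine ⟨2 / (r / 2), eventually_nhds_iff_ball.2 ⟨r / 2, half_pos hr, fun z hz => ?_⟩⟩
  have hsub : ball z (r / 2) ⊆ ball p r :=
    ball_subset_ball' (by linarith [mem_ball.1 hz])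
  refine Complex.norm_fderiv_le_div_of_mapsTo_ball
    (fun w hw => (hball w (hsub hw)).1.differentiableWithinAt) (fun w hw => ?_) (half_pos hr)
  have hw' := (hball w (hsub hw)).2
  have hz' := (hball z (hsub (mem_ball_self (half_pos hr)))).2
  rw [mem_ball] at hw' hz'
  rw [mem_closedBall]
  linarith [dist_triangle_right (f w) (f z) (f p)]

lemma fderiv_apply_eq_circleIntegral {F : Type*} [NormedAddCommGroup F] [NormedSpace ℂ F]
    [CompleteSpace F] {f : E → F} {z v : E} {ρ : ℝ} (hρ : 0 < ρ)
    (hf : ∀ t ∈ closedBall (0 : ℂ) ρ, DifferentiableAt ℂ f (z + t • v)) :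
    fderiv ℂ f z v =
      (2 * Real.pi * Complex.I : ℂ)⁻¹ • ∮ t in C(0, ρ), (1 / (t - 0) ^ 2) • f (z + t • v) := by
  have hline : ∀ t ∈ closedBall (0 : ℂ) ρ,
      HasDerivAt (fun t : ℂ => f (z + t • v)) (fderiv ℂ f (z + t • v) v) t := fun t ht =>
    (hf t ht).hasFDerivAt.comp_hasDerivAt t
      (by simpa using ((hasDerivAt_id t).smul_const v).const_add z)
  have hderiv : deriv (fun t : ℂ => f (z + t • v)) 0 = fderiv ℂ f z v := by
    simpa using (hline 0 (mem_closedBall_self hρ.le)).deriv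
  rw [DifferentiableOn.deriv_eq_smul_circleIntegral hρ
      (fun t ht => (hline t ht).differentiableAt.differentiableWithinAt), hderiv,
    inv_smul_smul₀ Complex.two_pi_I_ne_zero]

lemma differentiableAt_intervalIntegral_smul_comp_add [FiniteDimensional ℂ E] {f : E → ℂ}
    {g : ℝ → ℂ} {γ : ℝ → E} {p : E} {C : ℝ} (hg : Continuous g) (hγ : Continuous γ)
    (hf : ∀ᶠ z in 𝓝 p, ∀ θ, DifferentiableAt ℂ f (z + γ θ) ∧ ‖fderiv ℂ f (z + γ θ)‖ ≤ C)
    (a b : ℝ) : DifferentiableAt ℂ (fun z => ∫ θ in a..b, g θ • f (z + γ θ)) p := by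
  borelize E
  obtain ⟨s, hs, hfs⟩ := eventually_iff_exists_mem.1 hf
  have hcont : ∀ z ∈ s, Continuous fun θ => g θ • f (z + γ θ) := fun z hz =>
    hg.smul (continuous_iff_continuousAt.2 fun θ =>
      (hfs z hz θ).1.continuousAt.comp (f := fun θ => z + γ θ)
        (continuous_const.add hγ).continuousAt)
  have hmeas : Measurable fun θ => g θ • fderiv ℂ f (p + γ θ) :=
    hg.measurable.smul ((measurable_fderiv ℂ f).comp (continuous_const.add hγ).measurable)
  have hbound : ∀ θ, ∀ z ∈ s, ‖g θ • fderiv ℂ f (z + γ θ)‖ ≤ ‖g θ‖ * C := fun θ z hz => by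
    rw [norm_smul]
    exact mul_le_mul_of_nonneg_left (hfs z hz θ).2 (norm_nonneg _)
  exact (intervalIntegral.hasFDerivAt_integral_of_dominated_of_fderiv_le
    (F := fun z θ => g θ • f (z + γ θ)) (F' := fun z θ => g θ • fderiv ℂ f (z + γ θ))
    (bound := fun θ => ‖g θ‖ * C) hs
    (eventually_of_mem hs fun z hz => (hcont z hz).aestronglyMeasurable)
    ((hcont p (mem_of_mem_nhds hs)).intervalIntegrable a b)
    hmeas.aestronglyMeasurable
    (.of_forall fun θ _ => hbound θ)
    ((hg.norm.mul continuous_const).intervalIntegrable a b)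
    (.of_forall fun θ _ z hz =>
      ((hasFDerivAt_comp_add_right _).2 (hfs z hz θ).1.hasFDerivAt).const_smul
        (g θ))).differentiableAt

lemma differentiableAt_fderiv_apply [FiniteDimensional ℂ E] {f : E → ℂ} {p : E}
    (hf : ∀ᶠ z in 𝓝 p, DifferentiableAt ℂ f z) (v : E) :
    DifferentiableAt ℂ (fun z => fderiv ℂ f z v) p := by
  obtain ⟨C, hC⟩ := eventually_norm_fderiv_le hf
  obtain ⟨ρ, hρ, hnear⟩ : ∃ ρ > 0, ∀ᶠ z in 𝓝 p, ∀ t ∈ closedBall (0 : ℂ) ρ,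
      DifferentiableAt ℂ f (z + t • v) ∧ ‖fderiv ℂ f (z + t • v)‖ ≤ C := by
    have hcont : Tendsto (fun q : E × ℂ => q.1 + q.2 • v) (𝓝 p ×ˢ 𝓝 0) (𝓝 p) := by
      rw [← nhds_prod_eq]
      have : Continuous fun q : E × ℂ => q.1 + q.2 • v := by fun_prop
      simpa using this.tendsto (p, 0)
    obtain ⟨P, hP, Q, hQ, hPQ⟩ := eventually_prod_iff.1 (hcont.eventually (hf.and hC))
    obtain ⟨ρ, hρ, hball⟩ := nhds_basis_closedBall.mem_iff.1 hQ
    exact ⟨ρ, hρ, hP.mono fun z hz t ht => hPQ hz (hball ht)⟩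
  have hkernel : Continuous fun θ => deriv (circleMap 0 ρ) θ * (1 / (circleMap 0 ρ θ - 0) ^ 2) := by
    simp only [deriv_circleMap]
    exact (by fun_prop : Continuous _).mul (continuous_const.div (by fun_prop)
      fun θ => pow_ne_zero 2 (sub_ne_zero.2 (circleMap_ne_center hρ.ne')))
  have hcircle : Continuous fun θ => circleMap 0 ρ θ • v := by fun_prop
  have hdiff := (differentiableAt_intervalIntegral_smul_comp_add hkernel hcircle
    (hnear.mono fun z hz θ => hz _ (circleMap_mem_closedBall 0 hρ.le θ))
      0 (2 * Real.pi)).const_smul (2 * Real.pi * Complex.I : ℂ)⁻¹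
  refine hdiff.congr_of_eventuallyEq (hnear.mono fun z hz => ?_)
  simpa only [Pi.smul_apply, circleIntegral, smul_smul] using
    fderiv_apply_eq_circleIntegral hρ fun t ht => (hz t ht).1

lemma contDiffAt_of_eventually_differentiableAt_complex [FiniteDimensional ℂ E] {f : E → ℂ}
    {p : E} (hf : ∀ᶠ z in 𝓝 p, DifferentiableAt ℂ f z) (n : ℕ) : ContDiffAt ℂ n f p := by
  obtain ⟨U, hfU, hU, hpU⟩ := _root_.eventually_nhds_iff.1 hf
  suffices hsmooth : ∀ g : E → ℂ, (∀ z ∈ U, DifferentiableAt ℂ g z) → ContDiffOn ℂ n g U from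
    (hsmooth f hfU).contDiffAt (hU.mem_nhds hpU)
  induction n with
  | zero =>
    exact fun g hg => contDiffOn_zero.2 fun z hz => (hg z hz).continuousAt.continuousWithinAt
  | succ n ih =>
    intro g hg
    rw [Nat.cast_add, Nat.cast_one, contDiffOn_succ_iff_fderiv_of_isOpen hU]
    refine ⟨fun z hz => (hg z hz).differentiableWithinAt, by simp,
      contDiffOn_clm_apply.2 fun v => ih _ fun z hz => ?_⟩
    exact differentiableAt_fderiv_apply (eventually_of_mem (hU.mem_nhds hz) hg) v

end Smoothness

section IteratedDerivatives

variable {𝕜 E F : Type*} [RCLike 𝕜] [NormedAddCommGroup E] [NormedSpace 𝕜 E]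
  [NormedAddCommGroup F] [NormedSpace 𝕜 F] {f : E → F} {p : E} {n : ℕ}

lemma iteratedFDeriv_succ_apply_eq_fderiv
    (hf : DifferentiableAt 𝕜 (iteratedFDeriv 𝕜 n f) p) (v : Fin (n + 1) → E) :
    iteratedFDeriv 𝕜 (n + 1) f p v =
      fderiv 𝕜 (fun z => iteratedFDeriv 𝕜 n f z (Fin.tail v)) p (v 0) := by
  rw [iteratedFDeriv_succ_apply_left, fderiv_continuousMultilinear_apply_const_apply hf]

lemma iteratedDeriv_comp_eq_iteratedFDeriv {γ : 𝕜 → E} {v : E} {t : 𝕜}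
    (hγ : ∀ t, HasDerivAt γ v t) (hf : ContDiffAt 𝕜 n f (γ t)) :
    iteratedDeriv n (f ∘ γ) t = iteratedFDeriv 𝕜 n f (γ t) fun _ => v := by
  induction n generalizing t with
  | zero => simp
  | succ n ih =>
    have hlt : (n : WithTop ℕ∞) < (n + 1 : ℕ) := mod_cast n.lt_succ_self
    have hev : iteratedDeriv n (f ∘ γ) =ᶠ[𝓝 t] fun s => iteratedFDeriv 𝕜 n f (γ s) fun _ => v :=
      ((hγ t).continuousAt.eventually (hf.eventually (by simp))).mono
        fun s hs => ih (hs.of_le hlt.le)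
    have hdiff := hf.differentiableAt_iteratedFDeriv hlt
    rw [iteratedDeriv_succ, hev.deriv_eq, iteratedFDeriv_succ_apply_left]
    exact ((hdiff.hasFDerivAt.continuousMultilinear_apply_const _).comp_hasDerivAt t (hγ t)).deriv

lemma iteratedFDeriv_comp_swap_zero_one (hf : ContDiffAt 𝕜 (n + 2 : ℕ) f p)
    (v : Fin (n + 2) → E) :
    iteratedFDeriv 𝕜 (n + 2) f p (v ∘ Equiv.swap 0 1) = iteratedFDeriv 𝕜 (n + 2) f p v := by
  have hG : ContDiffAt 𝕜 2 (iteratedFDeriv 𝕜 n f) p :=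
    hf.iteratedFDeriv_right (by push_cast; rw [add_comm])
  have hdiff : DifferentiableAt 𝕜 (fderiv 𝕜 (iteratedFDeriv 𝕜 n f)) p :=
    (hG.fderiv_right (m := 1) (by norm_num)).differentiableAt (by norm_num)
  have hsnd : ∀ u : Fin (n + 2) → E, iteratedFDeriv 𝕜 (n + 2) f p u =
      fderiv 𝕜 (fderiv 𝕜 (iteratedFDeriv 𝕜 n f)) p (u 0) (u 1) (Fin.tail (Fin.tail u)) := by
    intro u
    have hdiff' := hf.differentiableAt_iteratedFDeriv (m := n + 1) (mod_cast (n + 1).lt_succ_self)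
    rw [iteratedFDeriv_succ_apply_eq_fderiv hdiff']
    simp only [iteratedFDeriv_succ_apply_left]
    rw [fderiv_continuousMultilinear_apply_const_apply (hdiff.clm_apply (differentiableAt_const _)),
      fderiv_clm_apply hdiff (differentiableAt_const _)]
    simp [Fin.tail]
  have htail : Fin.tail (Fin.tail (v ∘ Equiv.swap 0 1)) = Fin.tail (Fin.tail v) := by
    funext j
    simp [Fin.tail, Equiv.swap_apply_of_ne_of_ne, Fin.ext_iff]
  rw [hsnd, hsnd, htail]
  simpa using congrArg (fun M => M (Fin.tail (Fin.tail v)))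
    (hG.isSymmSndFDerivAt (by simp) (v 1) (v 0))

lemma iteratedFDeriv_comp_swap_castSucc_succ (hf : ContDiffAt 𝕜 (n + 1 : ℕ) f p) (i : Fin n)
    (v : Fin (n + 1) → E) :
    iteratedFDeriv 𝕜 (n + 1) f p (v ∘ Equiv.swap i.castSucc i.succ) =
      iteratedFDeriv 𝕜 (n + 1) f p v := by
  induction n generalizing p with
  | zero => exact i.elim0
  | succ n ih =>
    cases i using Fin.cases with
    | zero => exact iteratedFDeriv_comp_swap_zero_one hf v
    | succ j =>
      have hlt : ((n + 1 : ℕ) : WithTop ℕ∞) < (n + 1 + 1 : ℕ) := mod_cast (n + 1).lt_succ_self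
      have hdiff := hf.differentiableAt_iteratedFDeriv hlt
      have hhead : (v ∘ Equiv.swap j.succ.castSucc j.succ.succ) 0 = v 0 :=
        congrArg v (Equiv.swap_apply_of_ne_of_ne (by simp [Fin.ext_iff]) (by simp [Fin.ext_iff]))
      have htail : Fin.tail (v ∘ Equiv.swap j.succ.castSucc j.succ.succ) =
          Fin.tail v ∘ Equiv.swap j.castSucc j.succ := by
        funext l
        refine congrArg v ?_
        rw [← Fin.succ_castSucc]
        exact (Fin.succ_injective _).swap_apply _ _ _
      have hev : (fun z => iteratedFDeriv 𝕜 (n + 1) f z (Fin.tail v ∘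
          Equiv.swap j.castSucc j.succ)) =ᶠ[𝓝 p] fun z =>
          iteratedFDeriv 𝕜 (n + 1) f z (Fin.tail v) :=
        (hf.eventually (by simp)).mono fun z hz => ih (hz.of_le hlt.le) j _
      rw [iteratedFDeriv_succ_apply_eq_fderiv hdiff, iteratedFDeriv_succ_apply_eq_fderiv hdiff,
        hhead, htail, hev.fderiv_eq]

lemma iteratedFDeriv_comp_perm_of_contDiffAt (hf : ContDiffAt 𝕜 n f p) (v : Fin n → E)
    (σ : Equiv.Perm (Fin n)) :
    iteratedFDeriv 𝕜 n f p (v ∘ σ) = iteratedFDeriv 𝕜 n f p v := by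
  cases n with
  | zero => exact congrArg _ (Subsingleton.elim _ _)
  | succ n =>
    have hσ : σ ∈ Submonoid.closure (range fun i : Fin n => Equiv.swap i.castSucc i.succ) :=
      Equiv.Perm.mclosure_swap_castSucc_succ n ▸ Submonoid.mem_top σ
    induction hσ using Submonoid.closure_induction generalizing v with
    | mem τ hτ =>
      obtain ⟨i, rfl⟩ := hτ
      exact iteratedFDeriv_comp_swap_castSucc_succ hf i v
    | one => rfl
    | mul τ τ' _ _ hτ hτ' =>
      rw [Equiv.Perm.coe_mul, ← Function.comp_assoc, hτ', hτ]

lemma eq_zero_of_comp_perm_of_apply_const_eq_zero (M : E [×n]→L[𝕜] F)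
    (hsymm : ∀ (v : Fin n → E) (σ : Equiv.Perm (Fin n)), M (v ∘ σ) = M v)
    (hdiag : ∀ v, M (fun _ => v) = 0) : M = 0 := by
  ext v
  have hsum : ∑ σ : Equiv.Perm (Fin n), M (v ∘ σ) = 0 := by
    simpa [hdiag, iteratedFDeriv_fun_zero, Function.comp_def] using
      (M.iteratedFDeriv_comp_diagonal 0 v).symm
  have hfact : ((n.factorial : ℕ) : 𝕜) • M v = 0 := by
    simpa [hsymm, Fintype.card_perm, Nat.cast_smul_eq_nsmul] using hsum
  simpa [n.factorial_ne_zero] using hfact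

lemma exists_iteratedFDeriv_apply_const_ne_zero (hf : ContDiffAt 𝕜 n f p)
    (hne : iteratedFDeriv 𝕜 n f p ≠ 0) : ∃ v, iteratedFDeriv 𝕜 n f p (fun _ => v) ≠ 0 := by
  contrapose! hne
  exact eq_zero_of_comp_perm_of_apply_const_eq_zero _
    (iteratedFDeriv_comp_perm_of_contDiffAt hf) hne

end IteratedDerivatives

lemma exists_iteratedDeriv_ne_zero {F : Type*} [NormedAddCommGroup F] [NormedSpace ℂ F]
    [CompleteSpace F] {g : ℂ → F} {w : ℂ} (hg : AnalyticAt ℂ g w)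
    (hne : ¬ ∀ᶠ z in 𝓝 w, g z = 0) : ∃ n, iteratedDeriv n g w ≠ 0 := by
  contrapose! hne
  rw [← analyticOrderAt_eq_top]
  refine ENat.eq_top_iff_forall_ge.2 fun n => ?_
  exact (natCast_le_analyticOrderAt_iff_iteratedDeriv_eq_zero hg).2 fun i _ => hne i

section DividedDifferences

variable {F : Type*} [NormedAddCommGroup F] [NormedSpace ℂ F] [CompleteSpace F]

lemma hasDerivAt_iteratedDeriv_of_analyticAt {G : ℂ → F} {z : ℂ} (hG : AnalyticAt ℂ G z)
    (n : ℕ) : HasDerivAt (iteratedDeriv n G) (iteratedDeriv (n + 1) G z) z := by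
  rw [iteratedDeriv_succ, iteratedDeriv_eq_iterate]
  exact (hG.iterated_deriv n).differentiableAt.hasDerivAt

lemma iteratedDeriv_succ_sub_smul {G : ℂ → F} {x z : ℂ} (hG : AnalyticAt ℂ G z) (n : ℕ) :
    iteratedDeriv (n + 1) (fun w => (w - x) • G w) z =
      (z - x) • iteratedDeriv (n + 1) G z + (n + 1 : ℂ) • iteratedDeriv n G z := by
  induction n generalizing z with
  | zero =>
    have hprod := ((hasDerivAt_id z).sub_const x).smul hG.differentiableAt.hasDerivAt
    rw [iteratedDeriv_one, iteratedDeriv_one, iteratedDeriv_zero, Nat.cast_zero, zero_add]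
    exact hprod.deriv
  | succ n ih =>
    have hev : iteratedDeriv (n + 1) (fun w => (w - x) • G w) =ᶠ[𝓝 z] fun w =>
        (w - x) • iteratedDeriv (n + 1) G w + (n + 1 : ℂ) • iteratedDeriv n G w :=
      hG.eventually_analyticAt.mono fun w hw => ih hw
    have hprod := ((hasDerivAt_id z).sub_const x).smul
      (hasDerivAt_iteratedDeriv_of_analyticAt hG (n + 1))
    rw [iteratedDeriv_succ, hev.deriv_eq]
    refine (hprod.add ((hasDerivAt_iteratedDeriv_of_analyticAt hG n).const_smul _)).deriv.trans ?_
    push_cast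
    simp only [id_eq]
    module

lemma iteratedDeriv_succ_eq_smul_dslope_add {g : ℂ → F} {x z : ℂ}
    (hg : AnalyticAt ℂ (dslope g x) z) (n : ℕ) :
    iteratedDeriv (n + 1) g z = (z - x) • iteratedDeriv (n + 1) (dslope g x) z +
      (n + 1 : ℂ) • iteratedDeriv n (dslope g x) z := by
  have hmul : (fun w => (w - x) • dslope g x w) = fun w => g w - g x :=
    funext fun w => sub_smul_dslope g x w
  have hderiv : deriv (fun w => g w - g x) = deriv g := funext fun w => deriv_sub_const _
  rw [← iteratedDeriv_succ_sub_smul hg, hmul, iteratedDeriv_succ', iteratedDeriv_succ', hderiv]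

lemma hasDerivAt_pow_smul_iteratedDeriv_dslope_sub {g : ℂ → F} {x z : ℂ} {s : ℝ}
    (hg : AnalyticAt ℂ (dslope g x) (x + s * (z - x))) (a : F) (n : ℕ) :
    HasDerivAt (fun s : ℝ => (s : ℂ) ^ (n + 1) •
        (iteratedDeriv n (dslope g x) (x + s * (z - x)) - (n + 1 : ℂ)⁻¹ • a))
      ((s : ℂ) ^ n • (iteratedDeriv (n + 1) g (x + s * (z - x)) - a)) s := by
  have hline : HasDerivAt (fun s : ℝ => x + s * (z - x)) (z - x) s := by
    simpa using ((Complex.ofRealCLM.hasDerivAt (x := s)).mul_const (z - x)).const_add x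
  have hpow : HasDerivAt (fun s : ℝ => (s : ℂ) ^ (n + 1)) ((n + 1 : ℂ) * s ^ n) s := by
    simpa using (hasDerivAt_pow (n + 1) (s : ℂ)).comp_ofReal
  have hcomp := (hasDerivAt_iteratedDeriv_of_analyticAt hg n).scomp s hline
  have hn : (n + 1 : ℂ) ≠ 0 := n.cast_add_one_ne_zero
  refine (hpow.smul (hcomp.sub_const ((n + 1 : ℂ)⁻¹ • a))).congr_deriv ?_
  rw [iteratedDeriv_succ_eq_smul_dslope_add hg, add_sub_cancel_left, Function.comp_apply]
  match_scalars
  · field_simp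
    ring
  · field_simp
  · field_simp

variable {D : Set ℂ} {g : ℂ → F} {a : F} {ε : ℝ} {n : ℕ}

lemma norm_iteratedDeriv_dslope_sub_le (hD : IsOpen D) (hconv : Convex ℝ D)
    (hg : DifferentiableOn ℂ g D) (hbound : ∀ z ∈ D, ‖iteratedDeriv (n + 1) g z - a‖ ≤ ε)
    {x z : ℂ} (hx : x ∈ D) (hz : z ∈ D) :
    ‖iteratedDeriv n (dslope g x) z - (n + 1 : ℂ)⁻¹ • a‖ ≤ ε / (n + 1) := by
  have hG : AnalyticOnNhd ℂ (dslope g x) D :=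
    ((Complex.differentiableOn_dslope (hD.mem_nhds hx)).2 hg).analyticOnNhd hD
  have hmem : ∀ s ∈ Icc (0 : ℝ) 1, x + s * (z - x) ∈ D := fun s hs => by
    simpa using hconv.add_smul_sub_mem hx hz hs
  have hφ := fun s hs => hasDerivAt_pow_smul_iteratedDeriv_dslope_sub (hG _ (hmem s hs)) a n
  have hB : ∀ s : ℝ, HasDerivAt (fun s => ε * s ^ (n + 1) / (n + 1)) (ε * s ^ n) s := fun s => by
    have hn : (n + 1 : ℝ) ≠ 0 := n.cast_add_one_ne_zero
    refine (((hasDerivAt_pow (n + 1) s).const_mul ε).div_const (n + 1 : ℝ)).congr_deriv ?_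
    rw [Nat.cast_succ, Nat.add_sub_cancel]
    field_simp
  have hle := image_norm_le_of_norm_deriv_right_le_deriv_boundary
    (fun s hs => (hφ s hs).continuousAt.continuousWithinAt)
    (fun s hs => (hφ s (Ico_subset_Icc_self hs)).hasDerivWithinAt) (by simp) hB
    (fun s hs => ?_) (right_mem_Icc.2 zero_le_one)
  · simpa using hle
  · rw [norm_smul, norm_pow, Complex.norm_real, Real.norm_of_nonneg hs.1, mul_comm]
    exact mul_le_mul_of_nonneg_right (hbound _ (hmem s (Ico_subset_Icc_self hs)))
      (pow_nonneg hs.1 n)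

lemma exists_mul_prod_norm_sub_le (hD : IsOpen D) (hconv : Convex ℝ D)
    (hg : DifferentiableOn ℂ g D) (hbound : ∀ z ∈ D, ‖iteratedDeriv n g z - a‖ ≤ ε)
    {K : Set ℂ} (hK : IsCompact K) (hne : K.Nonempty) (hKD : K ⊆ D) :
    ∃ x : Fin n → ℂ, ∀ z ∈ K, (‖a‖ - ε) / (n.factorial * 2 ^ n) * ∏ i, ‖z - x i‖ ≤ ‖g z‖ := by
  induction n generalizing g a ε with
  | zero =>
    refine ⟨Fin.elim0, fun z hz => ?_⟩
    have := norm_sub_norm_le a (g z)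
    have := hbound z (hKD hz)
    rw [iteratedDeriv_zero, norm_sub_rev] at this
    simpa using by linarith
  | succ n ih =>
    obtain ⟨x₀, hx₀, hmin⟩ := hK.exists_isMinOn hne (hg.continuousOn.mono hKD).norm
    obtain ⟨x, hx⟩ := ih ((Complex.differentiableOn_dslope (hD.mem_nhds (hKD hx₀))).2 hg)
      fun z hz => norm_iteratedDeriv_dslope_sub_le hD hconv hg hbound (hKD hx₀) hz
    refine ⟨Fin.cons x₀ x, fun z hz => ?_⟩
    have hdiff : ‖z - x₀‖ * ‖dslope g x₀ z‖ ≤ 2 * ‖g z‖ := by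
      rw [← norm_smul, sub_smul_dslope]
      linarith [norm_sub_le (g z) (g x₀), isMinOn_iff.1 hmin z hz]
    have hcast : ‖((n : ℂ) + 1)⁻¹ • a‖ = ‖a‖ / (n + 1) := by
      rw [norm_smul, norm_inv, ← Nat.cast_succ, Complex.norm_natCast, Nat.cast_succ,
        inv_mul_eq_div]
    calc (‖a‖ - ε) / ((n + 1).factorial * 2 ^ (n + 1)) *
          ∏ i, ‖z - (Fin.cons x₀ x : Fin (n + 1) → ℂ) i‖
        = ‖z - x₀‖ * ((‖((n : ℂ) + 1)⁻¹ • a‖ - ε / (n + 1)) / (n.factorial * 2 ^ n) *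
            ∏ i, ‖z - x i‖) / 2 := by
          rw [hcast, Fin.prod_univ_succ, Nat.factorial_succ]
          simp only [Fin.cons_zero, Fin.cons_succ]
          push_cast
          field_simp
          ring
      _ ≤ ‖z - x₀‖ * ‖dslope g x₀ z‖ / 2 := by gcongr; exact hx z hz
      _ ≤ ‖g z‖ := by linarith

end DividedDifferences

section RieszPotentials

lemma prod_le_one_add_sum_pow_card {ι R : Type*} [CommSemiring R] [LinearOrder R]
    [CanonicallyOrderedAdd R] [IsOrderedRing R] (t : Finset ι) (y : ι → R) :
    ∏ i ∈ t, y i ≤ 1 + ∑ i ∈ t, y i ^ t.card := by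
  obtain rfl | hne := t.eq_empty_or_nonempty
  · simp
  · obtain ⟨j, hj, hmax⟩ := t.exists_max_image y hne
    calc ∏ i ∈ t, y i ≤ y j ^ t.card := Finset.prod_le_pow_card t y _ hmax
      _ ≤ ∑ i ∈ t, y i ^ t.card :=
        Finset.single_le_sum_of_canonicallyOrdered (f := fun i => y i ^ t.card) hj
      _ ≤ 1 + ∑ i ∈ t, y i ^ t.card := le_add_self

lemma enorm_norm_rpow {E : Type*} [NormedAddCommGroup E] {x : E} (hx : x ≠ 0) (s : ℝ) :
    ‖‖x‖ ^ s‖ₑ = ‖x‖ₑ ^ s := by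
  rw [Real.enorm_of_nonneg (Real.rpow_nonneg (norm_nonneg x) s),
    ← ENNReal.ofReal_rpow_of_pos (norm_pos_iff.2 hx), ofReal_norm]

lemma enorm_norm_rpow_neg_le {E : Type*} [NormedAddCommGroup E] {s : ℝ} (hs : 0 ≤ s) (x : E) :
    ‖‖x‖ ^ (-s)‖ₑ ≤ ‖x‖ₑ ^ (-s) := by
  obtain rfl | hx := eq_or_ne x 0
  · obtain rfl | hs := hs.eq_or_lt
    · simp
    · simp [hs]
  · exact (enorm_norm_rpow hx _).le

variable {E : Type*} [NormedAddCommGroup E] [NormedSpace ℝ E] [FiniteDimensional ℝ E]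
  [MeasurableSpace E] [BorelSpace E] {μ : Measure E} [μ.IsAddHaarMeasure] {s : ℝ}

lemma setLIntegral_ball_enorm_rpow_neg_ne_top (hs₀ : 0 ≤ s) (hs : s < Module.finrank ℝ E)
    (r : ℝ) : ∫⁻ z in ball 0 r, ‖z‖ₑ ^ (-s) ∂μ ≠ ⊤ := by
  have hdim : 0 < Module.finrank ℝ E := Nat.cast_pos.1 (hs₀.trans_lt hs)
  have : Nontrivial E := Module.nontrivial_of_finrank_pos hdim
  have hint : IntegrableOn (fun z : E => ‖z‖ ^ (-s)) (ball 0 r) μ :=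
    integrableOn_ball_of_norm_le_rpow (C := 1) hdim hs
      (.of_forall fun z => by
        rw [one_mul, Real.norm_of_nonneg (Real.rpow_nonneg (norm_nonneg z) _)])
      (continuous_norm.measurable.pow_const _).aestronglyMeasurable
  refine (lintegral_congr_ae (ae_restrict_of_ae ?_)).trans_ne hint.hasFiniteIntegral.ne
  filter_upwards [Measure.ae_ne μ (0 : E)] with z hz
  exact (enorm_norm_rpow hz _).symm

lemma exists_setLIntegral_enorm_sub_rpow_neg_le (hs₀ : 0 ≤ s) (hs : s < Module.finrank ℝ E)
    {K : Set E} (hK : μ K ≠ ⊤) :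
    ∃ C : ℝ≥0∞, C ≠ ⊤ ∧ ∀ x, ∫⁻ z in K, ‖z - x‖ₑ ^ (-s) ∂μ ≤ C := by
  set g : E → ℝ≥0∞ := (ball 0 1).indicator fun z => ‖z‖ₑ ^ (-s) with hg
  have hle : ∀ z, ‖z‖ₑ ^ (-s) ≤ g z + 1 := fun z => by
    by_cases hz : z ∈ ball (0 : E) 1
    · simp [hg, hz]
    · have : 1 ≤ ‖z‖ₑ := by
        rw [mem_ball_zero_iff, not_lt] at hz
        simpa [← ofReal_norm] using hz
      calc ‖z‖ₑ ^ (-s) ≤ ‖z‖ₑ ^ (0 : ℝ) :=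
            ENNReal.rpow_le_rpow_of_exponent_le this (neg_nonpos.2 hs₀)
        _ ≤ g z + 1 := by simp
  refine ⟨∫⁻ z in ball 0 1, ‖z‖ₑ ^ (-s) ∂μ + μ K,
    ENNReal.add_ne_top.2 ⟨setLIntegral_ball_enorm_rpow_neg_ne_top hs₀ hs 1, hK⟩, fun x => ?_⟩
  calc ∫⁻ z in K, ‖z - x‖ₑ ^ (-s) ∂μ
      ≤ ∫⁻ z in K, g (z - x) + 1 ∂μ := lintegral_mono fun z => hle _
    _ = ∫⁻ z in K, g (z - x) ∂μ + μ K := by simp [lintegral_add_right]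
    _ ≤ ∫⁻ z, g (z - x) ∂μ + μ K := by gcongr; exact Measure.restrict_le_self
    _ = ∫⁻ z in ball 0 1, ‖z‖ₑ ^ (-s) ∂μ + μ K := by
      rw [lintegral_sub_right_eq_self, lintegral_indicator measurableSet_ball]

lemma exists_setLIntegral_prod_enorm_sub_rpow_neg_le {n : ℕ} (hs₀ : 0 ≤ s)
    (hs : s * n < Module.finrank ℝ E) {K : Set E} (hK : μ K ≠ ⊤) :
    ∃ C : ℝ≥0∞, C ≠ ⊤ ∧ ∀ x : Fin n → E, ∫⁻ z in K, (∏ i, ‖z - x i‖ₑ) ^ (-s) ∂μ ≤ C := by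
  obtain ⟨C, hC, hCle⟩ := exists_setLIntegral_enorm_sub_rpow_neg_le
    (mul_nonneg hs₀ n.cast_nonneg) hs hK
  refine ⟨μ K + n * C, ENNReal.add_ne_top.2 ⟨hK, ENNReal.mul_ne_top (by simp) hC⟩, fun x => ?_⟩
  calc ∫⁻ z in K, (∏ i, ‖z - x i‖ₑ) ^ (-s) ∂μ
      ≤ ∫⁻ z in K, 1 + ∑ i, ‖z - x i‖ₑ ^ (-(s * n)) ∂μ := by
        refine lintegral_mono fun z => ?_
        rw [← ENNReal.prod_rpow_of_ne_top fun _ _ => enorm_ne_top]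
        refine (prod_le_one_add_sum_pow_card _ _).trans_eq ?_
        simp only [Finset.card_univ, Fintype.card_fin, ← ENNReal.rpow_natCast, ← ENNReal.rpow_mul,
          neg_mul]
    _ = μ K + ∑ i, ∫⁻ z in K, ‖z - x i‖ₑ ^ (-(s * n)) ∂μ := by
        rw [lintegral_add_left measurable_const, lintegral_finsetSum _ (by fun_prop)]
        simp
    _ ≤ μ K + n * C := by
        gcongr
        simpa using Finset.sum_le_card_nsmul Finset.univ _ C fun i _ => hCle (x i)

end RieszPotentials

section Slices

lemma setLIntegral_mul_measure_le_lintegral_translate {E X : Type*} [AddGroup E]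
    [MeasurableSpace E] [MeasurableAdd₂ E] [MeasurableSpace X] {μ : Measure E}
    [μ.IsAddRightInvariant] [SFinite μ] {ν : Measure X} [SFinite ν] {τ : X → E} {Ψ H : E → ℝ≥0∞}
    {A B : Set E} {T : Set X} (hτ : Measurable τ) (hΨ : Measurable Ψ) (hH : Measurable H)
    (hA : MeasurableSet A) (hB : MeasurableSet B) (hT : MeasurableSet T)
    (hinv : ∀ z t, Ψ (z + τ t) = Ψ z) (hAB : ∀ t ∈ T, ∀ z, z + τ t ∈ A → z ∈ B) :
    (∫⁻ z in A, Ψ z * H z ∂μ) * ν T ≤ ∫⁻ z in B, Ψ z * ∫⁻ t in T, H (z + τ t) ∂ν ∂μ := by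
  calc (∫⁻ z in A, Ψ z * H z ∂μ) * ν T
      = ∫⁻ _ in T, ∫⁻ z, A.indicator (fun z => Ψ z * H z) z ∂μ ∂ν := by
        rw [lintegral_indicator hA, setLIntegral_const]
    _ = ∫⁻ t in T, ∫⁻ z, A.indicator (fun z => Ψ z * H z) (z + τ t) ∂μ ∂ν := by
        simp_rw [lintegral_add_right_eq_self]
    _ ≤ ∫⁻ t in T, ∫⁻ z in B, Ψ z * H (z + τ t) ∂μ ∂ν := by
        refine setLIntegral_mono' hT fun t ht => ?_
        rw [← lintegral_indicator hB]
        refine lintegral_mono fun z => indicator_apply_le' (fun hz => ?_) fun _ => zero_le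
        rw [indicator_of_mem (hAB t ht z hz), hinv]
    _ = ∫⁻ z in B, ∫⁻ t in T, Ψ z * H (z + τ t) ∂ν ∂μ :=
        lintegral_lintegral_swap (by fun_prop)
    _ = ∫⁻ z in B, Ψ z * ∫⁻ t in T, H (z + τ t) ∂ν ∂μ := by
        refine lintegral_congr fun z => lintegral_const_mul _ (by fun_prop)

variable {E : Type*} [NormedAddCommGroup E] [NormedSpace ℂ E] [FiniteDimensional ℂ E]
  {h : E → ℂ} {p v : E} {n : ℕ} {s : ℝ}

lemma exists_eventually_mul_prod_norm_sub_le (hh : ∀ᶠ z in 𝓝 p, DifferentiableAt ℂ h z)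
    (hne : iteratedFDeriv ℂ n h p (fun _ => v) ≠ 0) :
    ∃ T ∈ 𝓝 (0 : ℂ), MeasurableSet T ∧ volume T ≠ ⊤ ∧ ∃ c > 0, ∀ᶠ z in 𝓝 p,
      ∃ x : Fin n → ℂ, ∀ t ∈ T, c * ∏ i, ‖t - x i‖ ≤ ‖h (z + t • v)‖ := by
  set a := iteratedFDeriv ℂ n h p fun _ => v
  have hsmooth := hh.eventually_nhds.mono fun z hz =>
    contDiffAt_of_eventually_differentiableAt_complex hz n
  have hclose : ∀ᶠ z in 𝓝 p, ‖iteratedFDeriv ℂ n h z (fun _ => v) - a‖ ≤ ‖a‖ / 2 := by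
    have hcont : ContinuousAt (fun z => iteratedFDeriv ℂ n h z fun _ => v) p :=
      (ContinuousMultilinearMap.apply ℂ (fun _ : Fin n => E) ℂ fun _ => v).continuous
        |>.continuousAt.comp (hsmooth.self_of_nhds.continuousAt_iteratedFDeriv le_rfl)
    exact (hcont.eventually_mem (closedBall_mem_nhds a (half_pos (norm_pos_iff.2 hne)))).mono
      fun z hz => mem_closedBall_iff_norm.1 hz
  have hline : Tendsto (fun q : E × ℂ => q.1 + q.2 • v) (𝓝 p ×ˢ 𝓝 0) (𝓝 p) := by
    rw [← nhds_prod_eq]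
    have : Continuous fun q : E × ℂ => q.1 + q.2 • v := by fun_prop
    simpa using this.tendsto (p, 0)
  obtain ⟨P, hP, Q, hQ, hPQ⟩ :=
    eventually_prod_iff.1 (hline.eventually (hh.and (hsmooth.and hclose)))
  obtain ⟨r, hr, hball⟩ := Metric.mem_nhds_iff.1 hQ
  refine ⟨closedBall 0 (r / 2), closedBall_mem_nhds _ (half_pos hr), measurableSet_closedBall,
    measure_closedBall_lt_top.ne, (‖a‖ - ‖a‖ / 2) / (n.factorial * 2 ^ n), ?_, hP.mono ?_⟩
  · have := norm_pos_iff.2 hne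
    rw [sub_half]
    positivity
  · intro z hz
    have hγ : ∀ t : ℂ, HasDerivAt (fun t => z + t • v) v t := fun t => by
      simpa using ((hasDerivAt_id t).smul_const v).const_add z
    refine exists_mul_prod_norm_sub_le isOpen_ball (convex_ball (0 : ℂ) r) (fun t ht => ?_)
      (fun t ht => ?_) (isCompact_closedBall 0 (r / 2)) (nonempty_closedBall.2 (half_pos hr).le)
      (closedBall_subset_ball (half_lt_self hr))
    · exact ((hPQ hz (hball ht)).1.comp t (hγ t).differentiableAt).differentiableWithinAt
    · have ht' := (hPQ hz (hball ht)).2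
      rw [← Function.comp_def h, iteratedDeriv_comp_eq_iteratedFDeriv hγ ht'.1]
      exact ht'.2

lemma exists_eventually_setLIntegral_enorm_rpow_neg_le
    (hh : ∀ᶠ z in 𝓝 p, DifferentiableAt ℂ h z)
    (hne : iteratedFDeriv ℂ n h p (fun _ => v) ≠ 0) (hs₀ : 0 ≤ s) (hs : s * n < 2) :
    ∃ T ∈ 𝓝 (0 : ℂ), ∃ C : ℝ≥0∞, C ≠ ⊤ ∧
      ∀ᶠ z in 𝓝 p, ∫⁻ t in T, ‖h (z + t • v)‖ₑ ^ (-s) ≤ C := by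
  obtain ⟨T, hT, hTm, hTfin, c, hc, hlower⟩ := exists_eventually_mul_prod_norm_sub_le hh hne
  obtain ⟨C, hC, hCle⟩ := exists_setLIntegral_prod_enorm_sub_rpow_neg_le hs₀
    (by simpa using hs) hTfin
  have hc' : ENNReal.ofReal c ^ (-s) ≠ ⊤ := by simp [ENNReal.rpow_eq_top_iff, hc]
  refine ⟨T, hT, ENNReal.ofReal c ^ (-s) * C, ENNReal.mul_ne_top hc' hC, hlower.mono fun z hz => ?_⟩
  obtain ⟨x, hx⟩ := hz
  calc ∫⁻ t in T, ‖h (z + t • v)‖ₑ ^ (-s)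
      ≤ ∫⁻ t in T, ENNReal.ofReal c ^ (-s) * (∏ i, ‖t - x i‖ₑ) ^ (-s) := by
        refine setLIntegral_mono' hTm fun t ht => ?_
        have hle : ENNReal.ofReal c * ∏ i, ‖t - x i‖ₑ ≤ ‖h (z + t • v)‖ₑ := by
          simpa only [ENNReal.ofReal_mul hc.le, ENNReal.ofReal_prod_of_nonneg
            (fun _ _ => norm_nonneg _), ofReal_norm] using ENNReal.ofReal_le_ofReal (hx t ht)
        rw [← ENNReal.mul_rpow_of_ne_top ENNReal.ofReal_ne_top
          (ENNReal.prod_ne_top fun _ _ => enorm_ne_top), ENNReal.rpow_neg, ENNReal.rpow_neg]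
        exact ENNReal.inv_le_inv.2 (ENNReal.rpow_le_rpow hle hs₀)
    _ = ENNReal.ofReal c ^ (-s) * ∫⁻ t in T, (∏ i, ‖t - x i‖ₑ) ^ (-s) :=
        lintegral_const_mul' _ _ hc'
    _ ≤ ENNReal.ofReal c ^ (-s) * C := by gcongr; exact hCle x

variable [MeasurableSpace E] [BorelSpace E] {μ : Measure E} [μ.IsAddHaarMeasure]

lemma exists_setLIntegral_mul_ne_top_of_slices {Ψ H : E → ℝ≥0∞} {C : ℝ≥0∞} {T : Set ℂ} {W : Set E}
    (hΨ : Measurable Ψ) (hH : Measurable H) (hinv : ∀ (z : E) (t : ℂ), Ψ (z + t • v) = Ψ z)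
    (hT : T ∈ 𝓝 0) (hC : C ≠ ⊤) (hslice : ∀ᶠ z in 𝓝 p, ∫⁻ t in T, H (z + t • v) ≤ C)
    (hW : W ∈ 𝓝 p) (hΨW : ∫⁻ z in W, Ψ z ∂μ ≠ ⊤) :
    ∃ r > 0, ∫⁻ z in ball p r, Ψ z * H z ∂μ ≠ ⊤ := by
  obtain ⟨R, hR, hball⟩ := eventually_nhds_iff_ball.1 (hslice.and hW)
  have hsmall : ∀ᶠ t : ℂ in 𝓝 0, t • v ∈ ball 0 (R / 2) :=
    (continuous_id.smul continuous_const).continuousAt.eventually_mem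
      (by simpa using ball_mem_nhds (0 : E) (half_pos hR))
  obtain ⟨ρ, hρ, hρT⟩ := eventually_nhds_iff_ball.1 (hsmall.and hT)
  have htranslate : ∀ t ∈ ball (0 : ℂ) ρ, ∀ z, z + t • v ∈ ball p (R / 2) → z ∈ ball p R := by
    intro t ht z hz
    have htv := mem_ball_zero_iff.1 (hρT t ht).1
    rw [mem_ball] at hz ⊢
    have := dist_triangle z (z + t • v) p
    rw [dist_self_add_right] at this
    linarith
  have hfubini := setLIntegral_mul_measure_le_lintegral_translate (μ := μ) (ν := volume)
    (τ := fun t : ℂ => t • v) (by fun_prop) hΨ hH measurableSet_ball measurableSet_ball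
    measurableSet_ball hinv htranslate
  refine ⟨R / 2, half_pos hR, fun htop => ?_⟩
  rw [htop, ENNReal.top_mul (measure_ball_pos volume 0 hρ).ne', top_le_iff] at hfubini
  refine (lt_top_iff_ne_top.2 (ENNReal.mul_ne_top hΨW hC)).not_ge (hfubini ▸ ?_)
  calc ∫⁻ z in ball p R, Ψ z * (∫⁻ t in ball (0 : ℂ) ρ, H (z + t • v)) ∂μ
      ≤ ∫⁻ z in ball p R, Ψ z * C ∂μ := by
        refine setLIntegral_mono' measurableSet_ball fun z hz => ?_
        gcongr
        exact (lintegral_mono_set fun t ht => (hρT t ht).2).trans (hball z hz).1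
    _ = (∫⁻ z in ball p R, Ψ z ∂μ) * C := lintegral_mul_const _ hΨ
    _ ≤ (∫⁻ z in W, Ψ z ∂μ) * C := by
        gcongr
        exact fun z hz => (hball z hz).2

lemma integrableAtFilter_mul_norm_rpow_neg {ψ : E → ℝ}
    (hh : ∀ᶠ z in 𝓝 p, DifferentiableAt ℂ h z)
    (hne : iteratedFDeriv ℂ n h p (fun _ => v) ≠ 0) (hs₀ : 0 ≤ s) (hs : s * n < 2)
    (hψ : Measurable ψ) (hinv : ∀ (z : E) (t : ℂ), ψ (z + t • v) = ψ z)
    (hψint : IntegrableAtFilter ψ (𝓝 p) μ) :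
    IntegrableAtFilter (fun z => ψ z * ‖h z‖ ^ (-s)) (𝓝 p) μ := by
  classical
  obtain ⟨T, hT, C, hC, hslice⟩ := exists_eventually_setLIntegral_enorm_rpow_neg_le hh hne hs₀ hs
  obtain ⟨W, hW, hψW⟩ := hψint
  obtain ⟨U, hhU, hU, hpU⟩ := _root_.eventually_nhds_iff.1 hh
  have hcont : ContinuousOn h U := fun z hz => (hhU z hz).continuousAt.continuousWithinAt
  have hH : Measurable (U.indicator fun z => ‖h z‖ₑ ^ (-s)) := by
    rw [← piecewise_eq_indicator]
    exact (ENNReal.continuous_rpow_const.comp_continuousOn hcont.enorm).measurable_piecewise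
      continuousOn_const hU.measurableSet
  obtain ⟨r, hr, hfin⟩ := exists_setLIntegral_mul_ne_top_of_slices (v := v) hψ.enorm hH
    (fun z t => congrArg _ (hinv z t)) hT hC (hslice.mono fun z hz =>
      (lintegral_mono fun t => indicator_le_self _ _ _).trans hz) hW hψW.hasFiniteIntegral.ne
  refine ⟨U ∩ ball p r, inter_mem (hU.mem_nhds hpU) (ball_mem_nhds p hr), ?_, ?_⟩
  · exact hψ.aestronglyMeasurable.mul ((hcont.norm.aestronglyMeasurable
      hU.measurableSet).aemeasurable.pow_const _).aestronglyMeasurable |>.mono_set inter_subset_left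
  · calc ∫⁻ z in U ∩ ball p r, ‖ψ z * ‖h z‖ ^ (-s)‖ₑ ∂μ
        ≤ ∫⁻ z in U ∩ ball p r, ‖ψ z‖ₑ * U.indicator (fun z => ‖h z‖ₑ ^ (-s)) z ∂μ := by
          refine setLIntegral_mono' (hU.measurableSet.inter measurableSet_ball) fun z hz => ?_
          rw [enorm_mul, indicator_of_mem hz.1]
          gcongr
          exact enorm_norm_rpow_neg_le hs₀ _
      _ ≤ ∫⁻ z in ball p r, ‖ψ z‖ₑ * U.indicator (fun z => ‖h z‖ₑ ^ (-s)) z ∂μ :=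
          lintegral_mono_set inter_subset_right
      _ < ⊤ := hfin.lt_top

end Slices

section IntegrableExponents

variable {ι X : Type*} [Fintype ι] [TopologicalSpace X] [MeasurableSpace X] {μ : Measure X}
  {f : ι → X → ℂ} {p : X}

/-- The exponents `α ≥ 0` for which `∏ i, |f i|^(-α i)` is integrable near `p`. Complex singularity
exponents of monomials in the `f i` are read off from the rays through the origin in this set. -/
def integrableExponents (μ : Measure X) (f : ι → X → ℂ) (p : X) : Set (ι → ℝ) :=
  {α | 0 ≤ α ∧ IntegrableAtFilter (fun z => ∏ i, ‖f i z‖ ^ (-α i)) (𝓝 p) μ}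

lemma rpow_neg_convexCombo {x a b α β : ℝ} (hx : 0 ≤ x) (hα : 0 ≤ α) (hβ : 0 ≤ β) (ha : 0 ≤ a)
    (hb : 0 ≤ b) : x ^ (-(a * α + b * β)) = (x ^ (-α)) ^ a * (x ^ (-β)) ^ b := by
  rw [Real.rpow_neg hx, Real.rpow_add_of_nonneg hx (by positivity) (by positivity), mul_inv,
    ← Real.rpow_neg hx, ← Real.rpow_neg hx, ← Real.rpow_mul hx, ← Real.rpow_mul hx]
  ring_nf

lemma convex_integrableExponents : Convex ℝ (integrableExponents μ f p) := by
  rintro α ⟨hα, hαint⟩ β ⟨hβ, hβint⟩ a b ha hb hab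
  set P : X → ℝ := fun z => ∏ i, ‖f i z‖ ^ (-α i)
  set Q : X → ℝ := fun z => ∏ i, ‖f i z‖ ^ (-β i)
  have hP : ∀ z, 0 ≤ P z := fun z => by positivity
  have hQ : ∀ z, 0 ≤ Q z := fun z => by positivity
  have hgeom : (fun z => ∏ i, ‖f i z‖ ^ (-(a • α + b • β) i)) = fun z => P z ^ a * Q z ^ b := by
    funext z
    rw [← Real.finsetProd_rpow _ _ fun _ _ => by positivity,
      ← Real.finsetProd_rpow _ _ fun _ _ => by positivity, ← Finset.prod_mul_distrib]
    exact Finset.prod_congr rfl fun i _ =>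
      rpow_neg_convexCombo (norm_nonneg _) (hα i) (hβ i) ha hb
  refine ⟨add_nonneg (smul_nonneg ha hα) (smul_nonneg hb hβ), ?_⟩
  rw [hgeom]
  obtain ⟨V, hV, hαV⟩ := hαint
  obtain ⟨W, hW, hβW⟩ := hβint
  have hαVW := hαV.mono_set (inter_subset_left (t := W))
  have hβVW := hβW.mono_set (inter_subset_right (s := V))
  refine ⟨V ∩ W, inter_mem hV hW, ((hαVW.const_mul a).add (hβVW.const_mul b)).mono' ?_ ?_⟩
  · exact ((hαVW.aemeasurable.pow_const a).mul (hβVW.aemeasurable.pow_const b)).aestronglyMeasurable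
  · refine .of_forall fun z => ?_
    rw [Real.norm_of_nonneg (mul_nonneg (Real.rpow_nonneg (hP z) a) (Real.rpow_nonneg (hQ z) b))]
    exact Real.geom_mean_le_arith_mean2_weighted ha hb (hP z) (hQ z) hab

end IntegrableExponents

lemma exists_mem_ray_of_convex {S : Set (Fin 3 → ℝ)} (hS : Convex ℝ S) {k N : ℕ} (hk : 1 ≤ k)
    (h₁ : ∀ a b : ℝ, 0 ≤ a → a < 2 → 0 ≤ b → b < 2 → ![a, b, 0] ∈ S)
    (h₂ : ∀ a b : ℝ, 0 ≤ a → a < 2 → 0 ≤ b → b * N < 2 → ![a, 0, b] ∈ S)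
    (h₃ : ∀ b : ℝ, 0 ≤ b → b * k < 2 → ![0, 0, b] ∈ S) :
    ∃ c : ℝ, 1 / (3 * k) < c ∧ ![2 * k * (2 * c), k * (2 * c), 2 * c] ∈ S := by
  have hk₀ : (1 : ℝ) ≤ k := mod_cast hk
  obtain ⟨u, hu₀, hu₁, huN⟩ : ∃ u : ℝ, 0 < u ∧ u ≤ 1 / 4 ∧ 7 * u * N < 2 := by
    refine ⟨1 / (4 * (N + 1)), by positivity, ?_, ?_⟩
    · rw [div_le_div_iff₀ (by positivity) (by positivity)]
      linarith [N.cast_nonneg (α := ℝ)]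
    · field_simp
      linarith
  have hu₂ : 0 < 1 - 2 * u := by linarith
  have hu₃ : 0 < 3 - 2 * u := by linarith
  have hP₁ : ![2 - u, 2 - u, 0] ∈ S :=
    h₁ _ _ (by linarith) (by linarith) (by linarith) (by linarith)
  have hP₂ : ![2 - u, 0, 7 * u / k] ∈ S :=
    h₂ _ _ (by linarith) (by linarith) (by positivity) <| by
      rw [div_mul_eq_mul_div, div_lt_iff₀ (by positivity)]
      linarith
  have hP₃ : ![0, 0, 2 * (1 - 4 * u) / (k * (1 - 2 * u))] ∈ S :=
    h₃ _ (div_nonneg (by linarith) (by positivity)) <| by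
      rw [div_mul_eq_mul_div, div_lt_iff₀ (by positivity)]
      nlinarith [mul_pos hu₀ (one_pos.trans_le hk₀)]
  -- The equal first two weights put the combination in the plane `α 0 = 2 * α 1`.
  have hsum := hS.sum_mem (t := Finset.univ)
    (w := ![1 / (3 - 2 * u), 1 / (3 - 2 * u), (1 - 2 * u) / (3 - 2 * u)])
    (z := ![_, _, _]) (by
      simpa [Fin.forall_fin_succ] using ⟨by linarith, div_nonneg hu₂.le hu₃.le⟩)
    (by simp [Fin.sum_univ_three]; field_simp; ring) (by
      simpa [Fin.forall_fin_succ] using ⟨hP₁, hP₂, hP₃⟩)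
  refine ⟨(2 - u) / (2 * k * (3 - 2 * u)), ?_, ?_⟩
  · rw [div_lt_div_iff₀ (by positivity) (by positivity)]
    nlinarith [mul_pos hu₀ (one_pos.trans_le hk₀)]
  · convert hsum using 1
    ext i
    fin_cases i <;> simp [Fin.sum_univ_three] <;> field_simp <;> ring

section VanishingOrder

variable {E : Type*} [NormedAddCommGroup E] [NormedSpace ℂ E] [FiniteDimensional ℂ E]
  [MeasurableSpace E] [BorelSpace E] {μ : Measure E} [μ.IsAddHaarMeasure]

lemma integrableAtFilter_norm_rpow_neg {h : E → ℂ} {p : E} {k : ℕ} {s : ℝ}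
    (hh : ∀ᶠ z in 𝓝 p, DifferentiableAt ℂ h z) (hne : iteratedFDeriv ℂ k h p ≠ 0)
    (hs₀ : 0 ≤ s) (hs : s * k < 2) : IntegrableAtFilter (fun z => ‖h z‖ ^ (-s)) (𝓝 p) μ := by
  obtain ⟨v, hv⟩ := exists_iteratedFDeriv_apply_const_ne_zero
    (contDiffAt_of_eventually_differentiableAt_complex hh k) hne
  simpa using integrableAtFilter_mul_norm_rpow_neg (μ := μ) hh hv hs₀ hs
    (measurable_const (a := (1 : ℝ))) (fun _ _ => rfl)
    ⟨ball p 1, ball_mem_nhds p one_pos, integrableOn_const measure_ball_lt_top.ne⟩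

end VanishingOrder

section Plane

variable {μ : Measure (ℂ × ℂ)} [μ.IsAddHaarMeasure] {h : ℂ × ℂ → ℂ} {p : ℂ × ℂ} {a b : ℝ} {n : ℕ}

lemma integrableAtFilter_norm_fst_rpow_neg (ha₀ : 0 ≤ a) (ha : a < 2) :
    IntegrableAtFilter (fun z : ℂ × ℂ => ‖z.1‖ ^ (-a)) (𝓝 p) μ := by
  refine integrableAtFilter_norm_rpow_neg (h := Prod.fst) (k := 1)
    (.of_forall fun _ => differentiableAt_fst) (fun hzero => ?_) ha₀ (by simpa)
  simpa [fderiv_fst] using congrArg (fun M => M fun _ => (1, 0)) hzero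

lemma integrableAtFilter_norm_fst_rpow_neg_mul (ha₀ : 0 ≤ a) (ha : a < 2)
    (hh : ∀ᶠ z in 𝓝 p, DifferentiableAt ℂ h z)
    (hne : iteratedDeriv n (fun w => h (p.1, w)) p.2 ≠ 0) (hb₀ : 0 ≤ b) (hb : b * n < 2) :
    IntegrableAtFilter (fun z : ℂ × ℂ => ‖z.1‖ ^ (-a) * ‖h z‖ ^ (-b)) (𝓝 p) μ := by
  have hslice : ∀ w, HasDerivAt (fun w : ℂ => (p.1, w)) ((0 : ℂ), (1 : ℂ)) w := fun w =>
    (hasDerivAt_const w p.1).prodMk (hasDerivAt_id w)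
  rw [← Function.comp_def h, iteratedDeriv_comp_eq_iteratedFDeriv hslice
    (contDiffAt_of_eventually_differentiableAt_complex hh n)] at hne
  exact integrableAtFilter_mul_norm_rpow_neg hh hne hb₀ hb (by fun_prop) (by simp)
    (integrableAtFilter_norm_fst_rpow_neg ha₀ ha)

lemma analyticAt_comp_mk (hh : ∀ᶠ z in 𝓝 p, DifferentiableAt ℂ h z) :
    AnalyticAt ℂ (fun w => h (p.1, w)) p.2 := by
  rw [Complex.analyticAt_iff_eventually_differentiableAt]
  have hline : Continuous fun w : ℂ => (p.1, w) := by fun_prop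
  exact (hline.tendsto p.2 |>.eventually hh).mono fun w hw => hw.comp w (by fun_prop)

end Plane

lemma norm_pow_mul_pow_mul_rpow_neg {R : Type*} [NormedDivisionRing R] (x y z : R) (m n : ℕ)
    (c : ℝ) : ‖x ^ m * y ^ n * z‖ ^ (-c) = ‖x‖ ^ (-(m * c)) * ‖y‖ ^ (-(n * c)) * ‖z‖ ^ (-c) := by
  rw [norm_mul, norm_mul, norm_pow, norm_pow, Real.mul_rpow (by positivity) (by positivity),
    Real.mul_rpow (by positivity) (by positivity), ← Real.rpow_natCast_mul (norm_nonneg x),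
    ← Real.rpow_natCast_mul (norm_nonneg y), mul_neg, mul_neg]

theorem singularity_exponent_gt_one_third_general
    (k : ℕ) (hk : 1 ≤ k)
    (h : ℂ × ℂ → ℂ) (U : Set (ℂ × ℂ)) (hU : IsOpen U) (h0U : (0 : ℂ × ℂ) ∈ U)
    (hh : DifferentiableOn ℂ h U)
    (horder_ne : iteratedFDeriv ℂ k h 0 ≠ 0)
    (hdiv₁ : ¬ ∀ᶠ w in nhds (0 : ℂ), h (0, w) = 0) :
    ∃ c : ℝ, 1 / (3 * (k : ℝ)) < c ∧
      ∃ V : Set (ℂ × ℂ), IsOpen V ∧ (0 : ℂ × ℂ) ∈ V ∧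
        IntegrableOn
          (fun z : ℂ × ℂ => ‖z.1 ^ (2 * k) * z.2 ^ k * h z‖ ^ (-(2 * c))) V volume := by
  have : (volume : Measure (ℂ × ℂ)).IsAddHaarMeasure := Measure.prod.instIsAddHaarMeasure _ _
  have hhol : ∀ᶠ z in 𝓝 0, DifferentiableAt ℂ h z :=
    eventually_of_mem (hU.mem_nhds h0U) fun z hz => hh.differentiableAt (hU.mem_nhds hz)
  obtain ⟨N, hN⟩ := exists_iteratedDeriv_ne_zero (analyticAt_comp_mk hhol) hdiv₁
  obtain ⟨c, hc, -, V, hV, hint⟩ := exists_mem_ray_of_convex (N := N)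
    (convex_integrableExponents (μ := volume) (f := ![Prod.fst, Prod.snd, h]) (p := 0)) hk
    (fun a b ha₀ ha hb₀ hb => ⟨by simp [Pi.le_def, Fin.forall_fin_succ, *], by
      simpa [Fin.prod_univ_three] using integrableAtFilter_norm_fst_rpow_neg_mul (n := 1) ha₀ ha
        (.of_forall fun _ => differentiableAt_snd) (by simp) hb₀ (by simpa)⟩)
    (fun a b ha₀ ha hb₀ hb => ⟨by simp [Pi.le_def, Fin.forall_fin_succ, *], by
      simpa [Fin.prod_univ_three] using
        integrableAtFilter_norm_fst_rpow_neg_mul ha₀ ha hhol hN hb₀ hb⟩)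
    (fun d hd₀ hd => ⟨by simp [Pi.le_def, Fin.forall_fin_succ, *], by
      simpa [Fin.prod_univ_three] using integrableAtFilter_norm_rpow_neg hhol horder_ne hd₀ hd⟩)
  obtain ⟨V', hV'V, hV', h0V'⟩ := _root_.mem_nhds_iff.1 hV
  refine ⟨c, hc, V', hV', h0V', (hint.mono_set hV'V).congr_fun (fun z _ => ?_) hV'.measurableSet⟩
  rw [norm_pow_mul_pow_mul_rpow_neg]
  simp [Fin.prod_univ_three]

/-- Lemma 5.2: let `k ≥ 1` and let `h` be holomorphic near `0 ∈ ℂ²` with vanishing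
order exactly `k` at `0`, such that neither `h(0, ·)` nor `h(·, 0)` is identically
zero near `0` (i.e. neither coordinate divides `h`). Then the complex singularity
exponent of `f(z₁,z₂) = z₁^(2k) · z₂^k · h(z₁,z₂)` at `0` is strictly greater than
`1/(3k)`. -/
theorem singularity_exponent_gt_one_third
    (k : ℕ) (hk : 1 ≤ k)
    (h : ℂ × ℂ → ℂ) (U : Set (ℂ × ℂ)) (hU : IsOpen U) (h0U : (0 : ℂ × ℂ) ∈ U)
    (hh : DifferentiableOn ℂ h U)
    (horder_lt : ∀ j < k, iteratedFDeriv ℂ j h 0 = 0)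
    (horder_ne : iteratedFDeriv ℂ k h 0 ≠ 0)
    (hdiv₁ : ¬ ∀ᶠ w in nhds (0 : ℂ), h (0, w) = 0)
    (hdiv₂ : ¬ ∀ᶠ w in nhds (0 : ℂ), h (w, 0) = 0) :
    ∃ c : ℝ, 1 / (3 * (k : ℝ)) < c ∧
      ∃ V : Set (ℂ × ℂ), IsOpen V ∧ (0 : ℂ × ℂ) ∈ V ∧
        IntegrableOn
          (fun z : ℂ × ℂ => ‖z.1 ^ (2 * k) * z.2 ^ k * h z‖ ^ (-(2 * c))) V volume :=
  singularity_exponent_gt_one_third_general k hk h U hU h0U hh horder_ne hdiv₁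
end

section
/- Let n ≥ 1, let U ⊆ ℂⁿ be open, let p ∈ U, let f₁, f₂ be holomorphic functions on U neither of which is identically zero near p, and let a, b > 0 be real numbers. Suppose that c_p(f₁) ≥ a, that c_p(f₂) ≥ b, and that c_p(f₁·f₂) = ab/(a+b), i.e. for every real c > ab/(a+b) the function z ↦ |f₁(z)·f₂(z)|^{-2c} fails to be integrable on every neighborhood of p. Then c_p(f₁) = a and c_p(f₂) = b. (Local form of Lemma 4.1.) -/
open MeasureTheory

/-- The complex singularity exponent of `f` at `p`: the supremum of the set of
`c > 0` such that `‖f‖ ^ (-2c)` is integrable on some open neighborhood of `p`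
with respect to Lebesgue measure on `ℂⁿ`. -/
noncomputable def singExp (n : ℕ) (f : (Fin n → ℂ) → ℂ) (p : Fin n → ℂ) : ℝ :=
  sSup {c : ℝ | 0 < c ∧ ∃ V : Set (Fin n → ℂ), IsOpen V ∧ p ∈ V ∧
    IntegrableOn (fun z => ‖f z‖ ^ (-(2 * c))) V volume}

/-!
If `|f₁|^(-2x)` and `|f₂|^(-2y)` are integrable near `p`, then so is their weighted geometric mean
with weights `y/(x+y)` and `x/(x+y)`, which is `|f₁ f₂|^(-2c)` with `1/c = 1/x + 1/y`. The
extremality of the product therefore forces `1/a + 1/b ≤ 1/x + 1/y`. An exponent `x > a` of `f₁`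
would keep the exponents `y` of `f₂` below a bound strictly smaller than `b`, contradicting
`b ≤ c_p(f₂)`.
-/

open Filter Topology

section Integrability

variable {X E : Type*} [MeasurableSpace X] {μ : Measure X} {l : Filter X}

lemma integrable_rpow_mul_rpow {F G : X → ℝ} (hF : Integrable F μ) (hG : Integrable G μ)
    (hF₀ : 0 ≤ᵐ[μ] F) (hG₀ : 0 ≤ᵐ[μ] G) {s t : ℝ} (hs : 0 ≤ s) (ht : 0 ≤ t) (hst : s + t = 1) :
    Integrable (fun z => F z ^ s * G z ^ t) μ := by
  refine ((hF.const_mul s).add (hG.const_mul t)).mono'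
    ((hF.aemeasurable.pow_const s).mul (hG.aemeasurable.pow_const t)).aestronglyMeasurable ?_
  filter_upwards [hF₀, hG₀] with z hFz hGz
  rw [Real.norm_of_nonneg (mul_nonneg (Real.rpow_nonneg hFz s) (Real.rpow_nonneg hGz t))]
  exact Real.geom_mean_le_arith_mean2_weighted hs ht hFz hGz hst

lemma norm_mul_rpow_harmonic [NonUnitalSeminormedRing E] [NormMulClass E] {x y : ℝ}
    (hx : 0 < x) (hy : 0 < y) (u v : E) :
    ‖u * v‖ ^ (-(2 * (x⁻¹ + y⁻¹)⁻¹)) =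
      (‖u‖ ^ (-(2 * x))) ^ (y / (x + y)) * (‖v‖ ^ (-(2 * y))) ^ (x / (x + y)) := by
  rw [norm_mul, Real.mul_rpow (norm_nonneg u) (norm_nonneg v), ← Real.rpow_mul (norm_nonneg u),
    ← Real.rpow_mul (norm_nonneg v)]
  congr 2 <;> field_simp <;> ring

/-- The integrability exponents of `f` along the filter `l`: the `c > 0` for which `‖f‖ ^ (-2c)` is
integrable on some set of `l`. For `l = 𝓝 p` and Lebesgue measure on `ℂⁿ` their supremum is the
complex singularity exponent. Zeros of `f` contribute `0`, since `0 ^ (-2c) = 0` for `c > 0`. -/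
def integrabilityExponents [Norm E] (f : X → E) (l : Filter X) (μ : Measure X) : Set ℝ :=
  {c | 0 < c ∧ IntegrableAtFilter (fun z => ‖f z‖ ^ (-(2 * c))) l μ}

lemma harmonic_mem_integrabilityExponents_mul [NonUnitalSeminormedRing E] [NormMulClass E]
    {f₁ f₂ : X → E} {x y : ℝ} (hx : x ∈ integrabilityExponents f₁ l μ)
    (hy : y ∈ integrabilityExponents f₂ l μ) :
    (x⁻¹ + y⁻¹)⁻¹ ∈ integrabilityExponents (fun z => f₁ z * f₂ z) l μ := by
  obtain ⟨hx₀, V, hV, hfV⟩ := hx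
  obtain ⟨hy₀, W, hW, hfW⟩ := hy
  refine ⟨by positivity, V ∩ W, inter_mem hV hW, ?_⟩
  simp only [norm_mul_rpow_harmonic hx₀ hy₀]
  exact integrable_rpow_mul_rpow
    (hfV.mono_set Set.inter_subset_left) (hfW.mono_set Set.inter_subset_right)
    (.of_forall fun _ => by positivity) (.of_forall fun _ => by positivity)
    (by positivity) (by positivity) (by field_simp; ring)

lemma integrableAtFilter_nhds_iff {ε : Type*} [TopologicalSpace X] [TopologicalSpace ε]
    [ContinuousENorm ε] {f : X → ε} {p : X} :
    IntegrableAtFilter f (𝓝 p) μ ↔ ∃ V : Set X, IsOpen V ∧ p ∈ V ∧ IntegrableOn f V μ := by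
  simpa only [IntegrableAtFilter, and_assoc, and_left_comm] using
    (nhds_basis_opens p).exists_iff fun _ _ hst (hf : IntegrableOn f _ μ) => hf.mono_set hst

end Integrability

lemma singExp_eq_sSup_integrabilityExponents (n : ℕ) (f : (Fin n → ℂ) → ℂ) (p : Fin n → ℂ) :
    singExp n f p = sSup (integrabilityExponents f (𝓝 p) volume) := by
  simp only [singExp, integrabilityExponents, integrableAtFilter_nhds_iff]

lemma sSup_le_of_inv_add_inv_le {S T : Set ℝ} {a b : ℝ} (ha : 0 < a) (hb : 0 < b)
    (hT : b ≤ sSup T) (h : ∀ x ∈ S, ∀ y ∈ T, a⁻¹ + b⁻¹ ≤ x⁻¹ + y⁻¹) : sSup S ≤ a := by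
  refine Real.sSup_le (fun x hx => ?_) ha.le
  by_contra! hax
  have hδ : b⁻¹ < a⁻¹ + b⁻¹ - x⁻¹ := by linarith [inv_strictAnti₀ ha hax]
  have hδ₀ : 0 < a⁻¹ + b⁻¹ - x⁻¹ := (inv_pos.mpr hb).trans hδ
  have hT_le : sSup T ≤ (a⁻¹ + b⁻¹ - x⁻¹)⁻¹ :=
    Real.sSup_le (fun y hy => le_inv_of_le_inv₀ hδ₀ (by linarith [h x hx y hy]))
      (inv_pos.mpr hδ₀).le
  exact (hT.trans hT_le).not_gt (inv_lt_of_inv_lt₀ hb hδ)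

theorem singExp_eq_of_product_extremal_general {X E : Type*} [MeasurableSpace X]
    [NonUnitalSeminormedRing E] [NormMulClass E] {μ : Measure X} {l : Filter X} {f₁ f₂ : X → E}
    {a b : ℝ} (ha : 0 < a) (hb : 0 < b)
    (hge₁ : a ≤ sSup (integrabilityExponents f₁ l μ))
    (hge₂ : b ≤ sSup (integrabilityExponents f₂ l μ))
    (hprod : a * b / (a + b) ∈ upperBounds (integrabilityExponents (fun z => f₁ z * f₂ z) l μ)) :
    sSup (integrabilityExponents f₁ l μ) = a ∧ sSup (integrabilityExponents f₂ l μ) = b := by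
  have inv_add_inv_le : ∀ x ∈ integrabilityExponents f₁ l μ, ∀ y ∈ integrabilityExponents f₂ l μ,
      a⁻¹ + b⁻¹ ≤ x⁻¹ + y⁻¹ := fun x hx y hy => by
    have hxy := harmonic_mem_integrabilityExponents_mul hx hy
    rw [inv_add_inv ha.ne' hb.ne', ← inv_div]
    exact inv_le_of_inv_le₀ (inv_pos.mp hxy.1) (hprod hxy)
  refine ⟨(sSup_le_of_inv_add_inv_le ha hb hge₂ inv_add_inv_le).antisymm hge₁,
    (sSup_le_of_inv_add_inv_le hb ha hge₁ fun y hy x hx => ?_).antisymm hge₂⟩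
  simpa only [add_comm] using inv_add_inv_le x hx y hy

/-- Local form of Lemma 4.1: if `f₁`, `f₂` are holomorphic near `p ∈ ℂⁿ`, neither
identically zero near `p`, `a, b > 0`, `c_p(f₁) ≥ a`, `c_p(f₂) ≥ b`, and
`c_p(f₁·f₂) = ab/(a+b)` (i.e. for every `c > ab/(a+b)` the function
`‖f₁·f₂‖ ^ (-2c)` fails to be integrable on every open neighborhood of `p`),
then `c_p(f₁) = a` and `c_p(f₂) = b`. -/
theorem singExp_eq_of_product_extremal
    (n : ℕ) (hn : 1 ≤ n)
    (U : Set (Fin n → ℂ)) (hU : IsOpen U) (p : Fin n → ℂ) (hp : p ∈ U)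
    (f₁ f₂ : (Fin n → ℂ) → ℂ)
    (hf₁ : DifferentiableOn ℂ f₁ U) (hf₂ : DifferentiableOn ℂ f₂ U)
    (hnz₁ : ¬ ∀ᶠ z in nhds p, f₁ z = 0)
    (hnz₂ : ¬ ∀ᶠ z in nhds p, f₂ z = 0)
    (a b : ℝ) (ha : 0 < a) (hb : 0 < b)
    (hge₁ : a ≤ singExp n f₁ p)
    (hge₂ : b ≤ singExp n f₂ p)
    (hprod : ∀ c : ℝ, a * b / (a + b) < c →
      ∀ V : Set (Fin n → ℂ), IsOpen V → p ∈ V →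
        ¬ IntegrableOn (fun z => ‖f₁ z * f₂ z‖ ^ (-(2 * c))) V volume) :
    singExp n f₁ p = a ∧ singExp n f₂ p = b := by
  simp only [singExp_eq_sSup_integrabilityExponents] at hge₁ hge₂ ⊢
  exact singExp_eq_of_product_extremal_general ha hb hge₁ hge₂ fun c hc => not_lt.mp fun hlt =>
    let ⟨V, hV, hpV, hint⟩ := integrableAtFilter_nhds_iff.mp hc.2
    hprod c hlt V hV hpV hint
end

section
/- Let k ≥ 1 be an integer and let h be a holomorphic function on an open neighborhood of 0 in ℂ² whose vanishing order at 0 equals 4k, and suppose that the line {z₁ = 0} is not tangent to the zero set of h at 0, in the sense that the one-variable holomorphic function z₂ ↦ h(0, z₂) has vanishing order exactly 4k at 0. Define f(z₁, z₂) = z₁^{k} · h(z₁, z₂). Then for every real c with 0 < c < 1/(4k), the function z ↦ |f(z)|^{-2c} is integrable on some open neighborhood of 0 with respect to Lebesgue measure on ℂ² ≅ ℝ⁴; in particular c₀(f) ≥ 1/(4k) > 2/(9k). (Integrability claim in Case 2 of the proof of Theorem 4.1.) -/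
open MeasureTheory

/-!
Fix `x` near `0` and look at the slice `h (x, ·)`. Its divided difference at `N + 1` nodes, given by
Hermite's contour integral, is continuous in `x` and in the nodes, and at `x = 0` with all nodes at
`0` it equals the `N`-th Taylor coefficient of `h (0, ·)`, which is nonzero; so it is bounded below
for all small `x` and nodes. On the other hand, at `N + 1` nodes that are `s`-separated and lie in
the sublevel set `{‖h (x, ·)‖ ≤ ε}` it is at most `(N + 1) ε / s ^ N`. Hence for `s` a large
multiple of `ε ^ (1 / N)` a sublevel set contains no `N + 1` such nodes, is covered by `N` discs of
radius `s`, and has area `O(ε ^ (2 / N))` uniformly in `x`. By the layer-cake formula the integrals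
of `‖h (x, ·)‖ ^ (-2c)` are uniformly bounded when `c * N < 1`, and integrating this bound against
`‖x‖ ^ (-2cm)`, which is integrable when `c * m < 1`, finishes the proof.
-/

open Filter Metric Set Topology
open scoped ENNReal NNReal

section LayerCake

variable {α : Type*} [MeasurableSpace α] {μ : Measure α}

lemma lintegral_Ioi_one_rpow_neg {b : ℝ} (hb : 1 < b) :
    ∫⁻ t in Ioi (1 : ℝ), ENNReal.ofReal (t ^ (-b)) = ENNReal.ofReal (b - 1)⁻¹ := by
  rw [← ofReal_integral_eq_lintegral_ofReal (integrableOn_Ioi_rpow_of_lt (neg_lt_neg hb) one_pos),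
    integral_Ioi_rpow_of_lt (neg_lt_neg hb) one_pos, Real.one_rpow, neg_div, one_div, ← inv_neg,
    neg_add, neg_neg, ← sub_eq_add_neg]
  exact ae_restrict_of_forall_mem measurableSet_Ioi fun t ht =>
    Real.rpow_nonneg (zero_lt_one.trans ht).le (-b)

lemma lintegral_rpow_neg_le_of_measure_sublevel_le {g : α → ℝ} (hg0 : ∀ x, 0 ≤ g x)
    (hg : AEMeasurable g μ) {K : ℝ≥0∞} {p a : ℝ} (hp : 0 ≤ p) (hpa : p < a)
    (hK : ∀ ε > 0, μ {x | g x ≤ ε} ≤ K * ENNReal.ofReal (ε ^ a)) :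
    ∫⁻ x, ENNReal.ofReal (g x ^ (-p)) ∂μ ≤ μ univ + K * ENNReal.ofReal (p / (a - p)) := by
  obtain rfl | hp := hp.eq_or_lt
  · simp
  have tail_le {t : ℝ} (ht : t ∈ Ioi (1 : ℝ)) :
      μ {x | t < g x ^ (-p)} ≤ K * ENNReal.ofReal (t ^ (-(a / p))) := by
    have ht0 : 0 < t := zero_lt_one.trans ht
    have sublevel : {x | t < g x ^ (-p)} ⊆ {x | g x ≤ t ^ (-p)⁻¹} := fun x hx =>
      le_of_not_gt fun hlt : t ^ (-p)⁻¹ < g x => lt_asymm (mem_ofPred.1 hx) <| by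
        simpa only [Real.rpow_inv_rpow ht0.le (neg_ne_zero.2 hp.ne')] using
          Real.rpow_lt_rpow_of_neg (Real.rpow_pos_of_pos ht0 _) hlt (neg_neg_of_pos hp)
    calc μ {x | t < g x ^ (-p)} ≤ μ {x | g x ≤ t ^ (-p)⁻¹} := measure_mono sublevel
      _ ≤ K * ENNReal.ofReal ((t ^ (-p)⁻¹) ^ a) := hK _ (Real.rpow_pos_of_pos ht0 _)
      _ = K * ENNReal.ofReal (t ^ (-(a / p))) := by
        rw [← Real.rpow_mul ht0.le, inv_neg, neg_mul, inv_mul_eq_div]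
  calc ∫⁻ x, ENNReal.ofReal (g x ^ (-p)) ∂μ
      = ∫⁻ t in Ioc 0 1 ∪ Ioi 1, μ {x | t < g x ^ (-p)} := by
        rw [Ioc_union_Ioi_eq_Ioi zero_le_one, lintegral_eq_lintegral_meas_lt μ
          (.of_forall fun x => Real.rpow_nonneg (hg0 x) _) (hg.pow_const _)]
    _ ≤ (∫⁻ t in Ioc 0 1, μ {x | t < g x ^ (-p)}) + ∫⁻ t in Ioi 1, μ {x | t < g x ^ (-p)} :=
        lintegral_union_le _ _ _
    _ ≤ (∫⁻ _ in Ioc (0 : ℝ) 1, μ univ)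
          + ∫⁻ t in Ioi (1 : ℝ), K * ENNReal.ofReal (t ^ (-(a / p))) :=
        add_le_add (lintegral_mono fun _ => measure_mono (subset_univ _))
          (setLIntegral_mono' measurableSet_Ioi fun _ => tail_le)
    _ = μ univ + K * ENNReal.ofReal (p / (a - p)) := by
        rw [setLIntegral_const, Real.volume_Ioc, sub_zero, ENNReal.ofReal_one, mul_one,
          lintegral_const_mul K (f := fun t => ENNReal.ofReal (t ^ (-(a / p)))) (by fun_prop),
          lintegral_Ioi_one_rpow_neg ((one_lt_div hp).2 hpa), div_sub_one hp.ne', inv_div]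

end LayerCake

lemma integrableOn_ball_norm_rpow_neg {E : Type*} [NormedAddCommGroup E] [NormedSpace ℝ E]
    [FiniteDimensional ℝ E] [MeasurableSpace E] [BorelSpace E] {μ : Measure E}
    [μ.IsAddHaarMeasure] [Nontrivial E] {a : ℝ} (ha : a < Module.finrank ℝ E) (r : ℝ) :
    IntegrableOn (fun x => ‖x‖ ^ (-a)) (ball 0 r) μ :=
  integrableOn_ball_of_norm_le_rpow (C := 1) Module.finrank_pos ha
    (.of_forall fun x => by rw [one_mul, Real.norm_of_nonneg (by positivity)])
    (measurable_norm.pow_const _).aestronglyMeasurable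

lemma integrable_prod_mul_of_lintegral_le {α β : Type*} [MeasurableSpace α] [MeasurableSpace β]
    {μ : Measure α} {ν : Measure β} [SFinite ν] {u : α → ℝ} {F : α × β → ℝ} {M : ℝ≥0∞}
    (hu : Integrable u μ) (hF : AEStronglyMeasurable F (μ.prod ν)) (hM : M ≠ ∞)
    (hle : ∀ᵐ x ∂μ, ∫⁻ y, ‖F (x, y)‖ₑ ∂ν ≤ M) :
    Integrable (fun z => u z.1 * F z) (μ.prod ν) := by
  refine ⟨hu.aestronglyMeasurable.comp_fst.mul hF, ?_⟩
  calc ∫⁻ z, ‖u z.1 * F z‖ₑ ∂μ.prod ν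
      ≤ ∫⁻ x, ∫⁻ y, ‖u x * F (x, y)‖ₑ ∂ν ∂μ := lintegral_prod_le _
    _ = ∫⁻ x, ‖u x‖ₑ * ∫⁻ y, ‖F (x, y)‖ₑ ∂ν ∂μ := by
        simp only [enorm_mul, lintegral_const_mul' _ _ enorm_ne_top]
    _ ≤ ∫⁻ x, ‖u x‖ₑ * M ∂μ := lintegral_mono_ae (hle.mono fun _ hx => by gcongr)
    _ = (∫⁻ x, ‖u x‖ₑ ∂μ) * M := lintegral_mul_const' _ _ hM
    _ < ∞ := ENNReal.mul_lt_top hu.hasFiniteIntegral hM.lt_top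

lemma integrable_norm_pow_mul_rpow_neg {β : Type*} [MeasurableSpace β] {ν : Measure β} [SFinite ν]
    {h : ℂ × β → ℂ} {ρ p : ℝ} {m : ℕ} {M : ℝ≥0∞} (hpm : p * m < 2)
    (hh : AEStronglyMeasurable h ((volume.restrict (ball 0 ρ)).prod ν)) (hM : M ≠ ∞)
    (hle : ∀ x ∈ ball 0 ρ, ∫⁻ y, ENNReal.ofReal (‖h (x, y)‖ ^ (-p)) ∂ν ≤ M) :
    Integrable (fun z => ‖z.1 ^ m * h z‖ ^ (-p)) ((volume.restrict (ball 0 ρ)).prod ν) := by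
  have factor (z : ℂ × β) : ‖z.1 ^ m * h z‖ ^ (-p) = ‖z.1‖ ^ (-(p * m)) * ‖h z‖ ^ (-p) := by
    rw [norm_mul, norm_pow, Real.mul_rpow (by positivity) (norm_nonneg _),
      ← Real.rpow_natCast_mul (norm_nonneg _), mul_neg, mul_comm (m : ℝ)]
  simp only [factor]
  refine integrable_prod_mul_of_lintegral_le
    (integrableOn_ball_norm_rpow_neg (by simpa using hpm) ρ)
    (hh.norm.aemeasurable.pow_const _).aestronglyMeasurable hM
    (ae_restrict_of_forall_mem measurableSet_ball fun x hx => ?_)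
  simpa only [Real.enorm_of_nonneg (Real.rpow_nonneg (norm_nonneg _) _)] using hle x hx

lemma measure_le_mul_of_coveringNumber_le {E : Type*} [NormedAddCommGroup E] [MeasurableSpace E]
    [BorelSpace E] {μ : Measure E} [μ.IsAddHaarMeasure] {A : Set E} {s : ℝ≥0} {n : ℕ}
    (h : coveringNumber s A ≤ n) : μ A ≤ n * μ (closedBall 0 s) := by
  have hfin : coveringNumber s A ≠ ⊤ := ne_top_of_le_ne_top (ENat.natCast_ne_top n) h
  obtain ⟨C, -, C_finite, C_cover, C_card⟩ := exists_set_encard_eq_coveringNumber hfin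
  lift C to Finset E using C_finite
  have card_le : C.card ≤ n := by
    rwa [← C_card, encard_coe_eq_coe_finsetCard, Nat.cast_le] at h
  calc μ A ≤ μ (⋃ x ∈ C, closedBall x s) :=
        measure_mono (isCover_iff_subset_iUnion_closedBall.1 C_cover)
    _ ≤ ∑ x ∈ C, μ (closedBall x s) := measure_biUnion_finset_le _ _
    _ = C.card * μ (closedBall 0 s) := by simp [Measure.addHaar_closedBall_center]
    _ ≤ n * μ (closedBall 0 s) := by gcongr

section DividedDifference

variable {X ι E : Type*} [TopologicalSpace X] [Fintype ι] [NormedAddCommGroup E] [NormedSpace ℂ E]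
  {c : ℂ} {R : ℝ}

lemma continuousOn_circleIntegral {f : X → ℂ → E} {s : Set X} (hR : 0 ≤ R)
    (hf : ContinuousOn f.uncurry (s ×ˢ sphere c R)) :
    ContinuousOn (fun x => ∮ z in C(c, R), f x z) s := by
  rw [continuousOn_iff_continuous_domRestrict]
  refine intervalIntegral.continuous_parametric_intervalIntegral_of_continuous' ?_ _ _
  refine .smul (by simp only [deriv_circleMap]; fun_prop) ?_
  exact hf.comp_continuous (f := fun q : s × ℝ => (q.1.1, circleMap c R q.2)) (by fun_prop)
    fun q => ⟨q.1.2, circleMap_mem_sphere c hR q.2⟩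

/-- The divided difference `g[w₀, …, wₙ]` at nodes in the disc of centre `c` and radius `R`, written
as Hermite's contour integral over the boundary circle so that the nodes are allowed to collide. -/
noncomputable def dividedDifference (g : ℂ → E) (c : ℂ) (R : ℝ) (w : ι → ℂ) : E :=
  (2 * Real.pi * Complex.I : ℂ)⁻¹ • ∮ z in C(c, R), (∏ i, (z - w i))⁻¹ • g z

lemma sub_ne_zero_of_mem_sphere_of_mem_ball {F : Type*} [SeminormedAddCommGroup F] {c z w : F}
    (hz : z ∈ sphere c R) (hw : w ∈ ball c R) : z - w ≠ 0 :=
  sub_ne_zero.2 (ne_of_mem_of_not_mem hz fun h => (mem_ball.1 hw).ne h)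

lemma continuousOn_dividedDifference {f : X → ℂ → E} {s : Set X} (hR : 0 ≤ R)
    (hf : ContinuousOn f.uncurry (s ×ˢ sphere c R)) :
    ContinuousOn (fun p : X × (ι → ℂ) => dividedDifference (f p.1) c R p.2)
      (s ×ˢ univ.pi fun _ => ball c R) := by
  have integrand_continuousOn :
      ContinuousOn (fun q : (X × (ι → ℂ)) × ℂ => (∏ i, (q.2 - q.1.2 i))⁻¹ • f q.1.1 q.2)
        ((s ×ˢ univ.pi fun _ => ball c R) ×ˢ sphere c R) := by
    refine .smul (.inv₀ (by fun_prop) ?_) ?_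
    · rintro ⟨⟨x, w⟩, z⟩ ⟨⟨-, hw⟩, hz⟩
      exact Finset.prod_ne_zero_iff.2 fun i _ =>
        sub_ne_zero_of_mem_sphere_of_mem_ball hz (hw i trivial)
    · exact hf.comp (f := fun q : (X × (ι → ℂ)) × ℂ => (q.1.1, q.2)) (by fun_prop)
        fun q hq => ⟨hq.1.1, hq.2⟩
  exact (continuousOn_circleIntegral hR integrand_continuousOn).const_smul _

lemma inv_prod_sub_eq_sum_nodalWeight [DecidableEq ι] [Nonempty ι] {F : Type*} [Field F]
    {w : ι → F} (hw : Function.Injective w) {z : F} (hz : ∀ i, z ≠ w i) :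
    (∏ i, (z - w i))⁻¹ = ∑ i, Lagrange.nodalWeight Finset.univ w i * (z - w i)⁻¹ := by
  have interpolate_one_eval := Lagrange.eval_interpolate_not_at_node (s := Finset.univ) (v := w) 1
    fun i _ => hz i
  rw [Lagrange.interpolate_one hw.injOn Finset.univ_nonempty, Lagrange.eval_nodal]
    at interpolate_one_eval
  exact inv_eq_of_mul_eq_one_right (by simpa using interpolate_one_eval.symm)

variable [CompleteSpace E] {g : ℂ → E}

lemma dividedDifference_eq_sum_nodalWeight [DecidableEq ι] [Nonempty ι]
    (hg : DifferentiableOn ℂ g (closedBall c R)) {w : ι → ℂ} (hw : Function.Injective w)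
    (hwR : ∀ i, w i ∈ ball c R) :
    dividedDifference g c R w = ∑ i, Lagrange.nodalWeight Finset.univ w i • g (w i) := by
  have hR : 0 ≤ R := (pos_of_mem_ball (hwR (Classical.arbitrary ι))).le
  have sub_ne {z : ℂ} (hz : z ∈ sphere c R) (i : ι) : z - w i ≠ 0 :=
    sub_ne_zero_of_mem_sphere_of_mem_ball hz (hwR i)
  have partial_fractions : EqOn (fun z => (∏ i, (z - w i))⁻¹ • g z)
      (fun z => ∑ i, Lagrange.nodalWeight Finset.univ w i • (z - w i)⁻¹ • g z) (sphere c R) := by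
    intro z hz
    simp only [inv_prod_sub_eq_sum_nodalWeight hw fun i => sub_ne_zero.1 (sub_ne hz i),
      Finset.sum_smul, mul_smul]
  have integrable (i : ι) :
      CircleIntegrable (fun z => Lagrange.nodalWeight Finset.univ w i • (z - w i)⁻¹ • g z) c R := by
    refine ContinuousOn.circleIntegrable hR (.const_smul (.smul ?_ ?_) _)
    · exact .inv₀ (by fun_prop) fun z hz => sub_ne hz i
    · exact hg.continuousOn.mono sphere_subset_closedBall
  rw [dividedDifference, circleIntegral.integral_congr hR partial_fractions,
    circleIntegral.integral_fun_sum fun i _ => integrable i, Finset.smul_sum]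
  refine Finset.sum_congr rfl fun i _ => ?_
  rw [circleIntegral.integral_smul, hg.circleIntegral_sub_inv_smul (hwR i), smul_comm,
    inv_smul_smul₀ Complex.two_pi_I_ne_zero]

lemma dividedDifference_const (hR : 0 < R) (hg : DifferentiableOn ℂ g (closedBall c R)) (n : ℕ) :
    dividedDifference g c R (fun _ : Fin (n + 1) => c) =
      (n.factorial : ℂ)⁻¹ • iteratedDeriv n g c := by
  have cauchy := hg.circleIntegral_one_div_sub_center_pow_smul hR n
  simp only [one_div] at cauchy
  simp only [dividedDifference, Finset.prod_const, Finset.card_univ, Fintype.card_fin]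
  rw [cauchy, div_eq_mul_inv, mul_smul, inv_smul_smul₀ Complex.two_pi_I_ne_zero]

lemma norm_nodalWeight_le [DecidableEq ι] {F : Type*} [NormedField F] {w : ι → F} {s : ℝ}
    (hs : 0 < s) (hw : Pairwise fun i j => s ≤ dist (w i) (w j)) (i : ι) :
    ‖Lagrange.nodalWeight Finset.univ w i‖ ≤ (s ^ (Fintype.card ι - 1))⁻¹ := by
  calc ‖Lagrange.nodalWeight Finset.univ w i‖
      = ∏ j ∈ Finset.univ.erase i, (dist (w i) (w j))⁻¹ := by
        simp [Lagrange.nodalWeight, dist_eq_norm]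
    _ ≤ ∏ _j ∈ Finset.univ.erase i, s⁻¹ :=
        Finset.prod_le_prod (fun _ _ => by positivity)
          fun j hj => inv_anti₀ hs (hw (Finset.ne_of_mem_erase hj).symm)
    _ = (s ^ (Fintype.card ι - 1))⁻¹ := by simp [Finset.card_erase_of_mem]

lemma norm_dividedDifference_le [Nonempty ι] (hg : DifferentiableOn ℂ g (closedBall c R))
    {w : ι → ℂ} (hwR : ∀ i, w i ∈ ball c R) {s ε : ℝ} (hs : 0 < s)
    (hw : Pairwise fun i j => s ≤ dist (w i) (w j)) (hε : ∀ i, ‖g (w i)‖ ≤ ε) :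
    ‖dividedDifference g c R w‖ ≤ Fintype.card ι * ((s ^ (Fintype.card ι - 1))⁻¹ * ε) := by
  classical
  have injective : Function.Injective w := fun i j hij => by
    by_contra hne
    exact (hs.trans_le (hw hne)).ne' (by rw [hij, dist_self])
  rw [dividedDifference_eq_sum_nodalWeight hg injective hwR, ← nsmul_eq_mul, ← Finset.card_univ]
  refine (norm_sum_le _ _).trans (Finset.sum_le_card_nsmul _ _ _ fun i _ => ?_)
  rw [norm_smul]
  gcongr
  exacts [norm_nodalWeight_le hs hw i, hε i]

lemma exists_le_norm_dividedDifference {f : X → ℂ → E} {x₀ : X} {U : Set X} (hR : 0 < R)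
    (hU : U ∈ 𝓝 x₀) (hfc : ContinuousOn f.uncurry (U ×ˢ sphere c R))
    (hfd : DifferentiableOn ℂ (f x₀) (closedBall c R)) {n : ℕ}
    (hne : iteratedDeriv n (f x₀) c ≠ 0) :
    ∃ δ > 0, ∃ r ∈ Ioc 0 R, ∀ᶠ x in 𝓝 x₀, ∀ w : Fin (n + 1) → ℂ, (∀ i, w i ∈ ball c r) →
      δ ≤ ‖dividedDifference (f x) c R w‖ := by
  have confluent_ne : dividedDifference (f x₀) c R (fun _ : Fin (n + 1) => c) ≠ 0 := by
    rw [dividedDifference_const hR hfd]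
    exact smul_ne_zero (inv_ne_zero (Nat.cast_ne_zero.2 n.factorial_ne_zero)) hne
  have domain_mem_nhds : U ×ˢ univ.pi (fun _ : Fin (n + 1) => ball c R) ∈ 𝓝 (x₀, fun _ => c) :=
    prod_mem_nhds hU (set_pi_mem_nhds finite_univ fun _ _ => ball_mem_nhds c hR)
  have continuousAt := (continuousOn_dividedDifference (ι := Fin (n + 1)) hR.le hfc).continuousAt
    domain_mem_nhds
  have near := continuousAt.norm.eventually
    (lt_mem_nhds (half_lt_self (norm_pos_iff.2 confluent_ne)))
  rw [nhds_prod_eq, eventually_prod_iff] at near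
  obtain ⟨P, hP, Q, hQ, hPQ⟩ := near
  obtain ⟨r, hr, hrQ⟩ := eventually_nhds_iff_ball.1 hQ
  refine ⟨_, half_pos (norm_pos_iff.2 confluent_ne), min r R, ⟨lt_min hr hR, min_le_right _ _⟩,
    hP.mono fun x hx w hw => (hPQ hx (hrQ w ?_)).le⟩
  rw [ball_pi _ hr]
  exact fun i _ => ball_subset_ball (min_le_left _ _) (hw i)

lemma packingNumber_le_of_le_norm_dividedDifference
    (hg : DifferentiableOn ℂ g (closedBall c R)) {A : Set ℂ} (hA : A ⊆ ball c R) {n : ℕ} {δ ε : ℝ}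
    (hδ : ∀ w : Fin (n + 1) → ℂ, (∀ i, w i ∈ A) → δ ≤ ‖dividedDifference g c R w‖)
    (hε : ∀ w ∈ A, ‖g w‖ ≤ ε) {s : ℝ≥0} (hs : 0 < s) (hδε : (n + 1) * ε < δ * s ^ n) :
    packingNumber s A ≤ n := by
  refine iSup₂_le fun C hCA => iSup_le fun hC => ?_
  by_contra! hlt
  obtain ⟨F, hFC, hF⟩ := exists_subset_encard_eq (Order.add_one_le_of_lt hlt)
  lift F to Finset ℂ using finite_of_encard_eq_coe (k := n + 1) (by exact_mod_cast hF)
  rw [encard_coe_eq_coe_finsetCard] at hF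
  let e := (F.equivFinOfCardEq (n := n + 1) (by exact_mod_cast hF)).symm
  have mem_A (i) : (e i : ℂ) ∈ A := hCA (hFC (e i).2)
  have separated : Pairwise fun i j => (s : ℝ) ≤ dist (e i : ℂ) (e j) := fun i j hij => by
    have edist_gt : (s : ℝ≥0∞) < edist (e i : ℂ) (e j) :=
      hC (hFC (e i).2) (hFC (e j).2) (Subtype.coe_injective.ne (e.injective.ne hij))
    rw [edist_nndist, ENNReal.coe_lt_coe] at edist_gt
    exact_mod_cast edist_gt.le
  have upper := norm_dividedDifference_le hg (fun i => hA (mem_A i)) (NNReal.coe_pos.2 hs)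
    separated fun i => hε _ (mem_A i)
  refine hδε.not_ge ?_
  calc δ * s ^ n ≤ (n + 1) * ((s ^ n : ℝ)⁻¹ * ε) * s ^ n := by
        gcongr
        simpa using (hδ _ mem_A).trans upper
    _ = (n + 1) * ε := by field_simp

lemma volume_sublevel_le_of_le_norm_dividedDifference
    (hg : DifferentiableOn ℂ g (closedBall c R)) {r : ℝ} (hr : r ≤ R) {n : ℕ} (hn : n ≠ 0) {δ : ℝ}
    (hδ0 : 0 < δ)
    (hδ : ∀ w : Fin (n + 1) → ℂ, (∀ i, w i ∈ ball c r) → δ ≤ ‖dividedDifference g c R w‖)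
    {ε : ℝ} (hε : 0 < ε) :
    volume {w ∈ ball c r | ‖g w‖ ≤ ε} ≤
      n * NNReal.pi * ENNReal.ofReal ((2 * (n + 1) / δ) ^ (2 / n : ℝ)) *
        ENNReal.ofReal (ε ^ (2 / n : ℝ)) := by
  have base_pos : 0 < 2 * (n + 1) / δ * ε := by positivity
  let s : ℝ := (2 * (n + 1) / δ * ε) ^ (n : ℝ)⁻¹
  have hs : 0 < s := Real.rpow_pos_of_pos base_pos _
  have hδε : (n + 1) * ε < δ * s ^ n := by
    rw [Real.rpow_inv_natCast_pow base_pos.le hn]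
    field_simp
    norm_num
  have packing : packingNumber s.toNNReal {w ∈ ball c r | ‖g w‖ ≤ ε} ≤ n :=
    packingNumber_le_of_le_norm_dividedDifference hg
      ((sep_subset _ _).trans (ball_subset_ball hr)) (fun w hw => hδ w fun i => (hw i).1)
      (fun w hw => hw.2) (Real.toNNReal_pos.2 hs) (by rwa [Real.coe_toNNReal _ hs.le])
  have sq_eq : s ^ 2 = (2 * (n + 1) / δ) ^ (2 / n : ℝ) * ε ^ (2 / n : ℝ) := by
    rw [← Real.mul_rpow (by positivity) hε.le, ← Real.rpow_mul_natCast base_pos.le,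
      inv_mul_eq_div, Nat.cast_ofNat]
  refine (measure_le_mul_of_coveringNumber_le
    ((coveringNumber_le_packingNumber _ _).trans packing)).trans_eq ?_
  rw [Real.coe_toNNReal _ hs.le, Complex.volume_closedBall, ← ENNReal.ofReal_pow hs.le, sq_eq,
    ENNReal.ofReal_mul (by positivity)]
  ring

lemma exists_lintegral_rpow_neg_norm_le {f : X → ℂ → E} {x₀ : X} {U : Set X} (hR : 0 < R)
    (hU : U ∈ 𝓝 x₀) (hfc : ContinuousOn f.uncurry (U ×ˢ sphere c R))
    (hfd : ∀ x ∈ U, DifferentiableOn ℂ (f x) (closedBall c R)) {n : ℕ} (hn : n ≠ 0)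
    (hne : iteratedDeriv n (f x₀) c ≠ 0) {p : ℝ} (hp : 0 ≤ p) (hpn : p * n < 2) :
    ∃ r ∈ Ioc 0 R, ∃ M ≠ ∞, ∀ᶠ x in 𝓝 x₀,
      ∫⁻ w in ball c r, ENNReal.ofReal (‖f x w‖ ^ (-p)) ≤ M := by
  obtain ⟨δ, hδ, r, hr, lower⟩ :=
    exists_le_norm_dividedDifference hR hU hfc (hfd x₀ (mem_of_mem_nhds hU)) hne
  have exponent_lt : p < 2 / n := (lt_div_iff₀ (by positivity)).2 hpn
  let K : ℝ≥0∞ := n * NNReal.pi * ENNReal.ofReal ((2 * (n + 1) / δ) ^ (2 / n : ℝ))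
  refine ⟨r, hr, volume (ball c r) + K * ENNReal.ofReal (p / (2 / n - p)), by finiteness, ?_⟩
  filter_upwards [lower, hU] with x hx hxU
  have sublevel_le (ε) (hε : ε > 0) :
      volume.restrict (ball c r) {w | ‖f x w‖ ≤ ε} ≤ K * ENNReal.ofReal (ε ^ (2 / n : ℝ)) := by
    rw [Measure.restrict_apply' measurableSet_ball, inter_comm]
    exact volume_sublevel_le_of_le_norm_dividedDifference (hfd x hxU) hr.2 hn hδ hx hε
  have aemeasurable : AEMeasurable (fun w => ‖f x w‖) (volume.restrict (ball c r)) :=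
    ((hfd x hxU).continuousOn.norm.mono (ball_subset_closedBall.trans
      (closedBall_subset_closedBall hr.2))).aemeasurable measurableSet_ball
  simpa only [Measure.restrict_apply_univ] using lintegral_rpow_neg_le_of_measure_sublevel_le
    (fun _ => norm_nonneg _) aemeasurable hp exponent_lt sublevel_le

end DividedDifference

theorem case_two_integrability_general (m : ℕ) {N : ℕ} (hN : N ≠ 0) {h : ℂ × ℂ → ℂ}
    {U : Set (ℂ × ℂ)} (hU : IsOpen U) (h0U : (0 : ℂ × ℂ) ∈ U) (hh : DifferentiableOn ℂ h U)
    (hne : iteratedDeriv N (fun w : ℂ => h (0, w)) 0 ≠ 0) {c : ℝ} (hc0 : 0 ≤ c) (hcm : c * m < 1)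
    (hcN : c * N < 1) :
    ∃ V : Set (ℂ × ℂ), IsOpen V ∧ (0 : ℂ × ℂ) ∈ V ∧
      IntegrableOn (fun z : ℂ × ℂ => ‖z.1 ^ m * h z‖ ^ (-(2 * c))) V volume := by
  obtain ⟨R, hR, hRU⟩ := nhds_basis_closedBall.mem_iff.1 (hU.mem_nhds h0U)
  rw [← Prod.mk_zero_zero, ← closedBall_prod_same] at hRU
  have slice_differentiable (x) (hx : x ∈ closedBall (0 : ℂ) R) :
      DifferentiableOn ℂ (fun w => h (x, w)) (closedBall 0 R) :=
    hh.comp (by fun_prop) fun w hw => hRU ⟨hx, hw⟩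
  obtain ⟨r, hr, M, hM, slice_le⟩ := exists_lintegral_rpow_neg_norm_le
    (f := fun x w => h (x, w)) hR (closedBall_mem_nhds 0 hR)
    (hh.continuousOn.mono ((prod_mono_right sphere_subset_closedBall).trans hRU))
    slice_differentiable hN hne (p := 2 * c) (by positivity) (by linarith)
  obtain ⟨ρ, hρ, hρM⟩ := eventually_nhds_iff_ball.1 (slice_le.and (closedBall_mem_nhds 0 hR))
  have box_subset : ball (0 : ℂ) ρ ×ˢ ball (0 : ℂ) r ⊆ U := fun z hz =>
    hRU ⟨(hρM _ hz.1).2, ball_subset_closedBall (ball_subset_ball hr.2 hz.2)⟩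
  refine ⟨ball 0 ρ ×ˢ ball 0 r, isOpen_ball.prod isOpen_ball,
    ⟨mem_ball_self hρ, mem_ball_self hr.1⟩, ?_⟩
  have measurable : AEStronglyMeasurable h
      ((volume.restrict (ball 0 ρ)).prod (volume.restrict (ball 0 r))) := by
    rw [Measure.prod_restrict]
    exact (hh.continuousOn.mono box_subset).aestronglyMeasurable
      (measurableSet_ball.prod measurableSet_ball)
  rw [IntegrableOn, Measure.volume_eq_prod, ← Measure.prod_restrict]
  exact integrable_norm_pow_mul_rpow_neg (by linarith) measurable hM fun x hx => (hρM x hx).1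

/-- Integrability claim in Case 2 of the proof of Theorem 4.1: let `k ≥ 1` and let
`h` be holomorphic near `0 ∈ ℂ²` with vanishing order `4k` at `0`, such that the
line `{z₁ = 0}` is not tangent to the zero set of `h` at `0`, in the sense that
`z₂ ↦ h(0, z₂)` has vanishing order exactly `4k` at `0`. Then for
`f(z₁,z₂) = z₁^k · h(z₁,z₂)` and every `0 < c < 1/(4k)`, the function
`‖f‖ ^ (-2c)` is integrable on some open neighborhood of `0`. -/
theorem case_two_integrability
    (k : ℕ) (hk : 1 ≤ k)
    (h : ℂ × ℂ → ℂ) (U : Set (ℂ × ℂ)) (hU : IsOpen U) (h0U : (0 : ℂ × ℂ) ∈ U)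
    (hh : DifferentiableOn ℂ h U)
    (horder_lt : ∀ j < 4 * k, iteratedFDeriv ℂ j h 0 = 0)
    (horder_ne : iteratedFDeriv ℂ (4 * k) h 0 ≠ 0)
    (htang_lt : ∀ j < 4 * k, iteratedDeriv j (fun w : ℂ => h (0, w)) 0 = 0)
    (htang_ne : iteratedDeriv (4 * k) (fun w : ℂ => h (0, w)) 0 ≠ 0)
    (c : ℝ) (hc0 : 0 < c) (hc : c < 1 / (4 * (k : ℝ))) :
    ∃ V : Set (ℂ × ℂ), IsOpen V ∧ (0 : ℂ × ℂ) ∈ V ∧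
      IntegrableOn (fun z : ℂ × ℂ => ‖z.1 ^ k * h z‖ ^ (-(2 * c))) V volume := by
  have hk0 : (0 : ℝ) < k := by exact_mod_cast hk
  have c_lt : c * (4 * k) < 1 := (lt_div_iff₀ (by positivity)).1 hc
  exact case_two_integrability_general k (by omega) hU h0U hh htang_ne hc0.le
    (by nlinarith [mul_pos hc0 hk0]) (by push_cast; exact c_lt)
end
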